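/- arXiv:2010.04299 — 7 statements merged into one kernel-verified Lean document; each statement's English description precedes it below -/
import Mathlib

section
/- Let n ≥ 2 be an even integer and α > 0 a real number. Define λ_k(α,n) = 2 ∑_{j=1}^{n−1} j^{−α} cos(2πkj/n) for k ∈ {0,…,n−1}. Then λ_0(α,n) ≥ λ_k(α,n) ≥ λ_{n/2}(α,n) for every k ∈ {0,…,n−1}; that is, among the eigenvalues of the long-range circulant Hamiltonian, the largest is attained at k = 0 and the smallest at k = n/2. -/
/-- Eigenvalues of the long-range circulant Hamiltonian. -/
noncomputable def lam (α : ℝ) (n k : ℕ) : ℝ :=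
  2 * ∑ j ∈ Finset.Icc 1 (n - 1), (j : ℝ) ^ (-α) * Real.cos (2 * Real.pi * k * j / n)

lemma geom_cos (r θ : ℝ) (m : ℕ) :
    (∑ j ∈ Finset.range m, r ^ j * Real.cos (j * θ)) * (1 - 2 * r * Real.cos θ + r ^ 2) =
      1 - r * Real.cos θ - r ^ m * Real.cos (m * θ) + r ^ (m + 1) * Real.cos (m * θ - θ) := by
  induction m with
  | zero => simp
  | succ m ih =>
    rw [Finset.sum_range_succ, add_mul, ih]
    have h1 : ((m + 1 : ℕ) : ℝ) * θ = m * θ + θ := by push_cast; ring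
    have h2 : (m : ℝ) * θ + θ - θ = m * θ := by ring
    rw [h1, h2, Real.cos_add, Real.cos_sub]
    ring

/-- Closed form of the finite cosine-geometric sum at an `n`-th root of unity. -/
lemma geom_cos_root (r θ : ℝ) (n : ℕ) (k : ℕ) (h : n * θ = k * (2 * Real.pi)) :
    (∑ j ∈ Finset.range n, r ^ j * Real.cos (j * θ)) * (1 - 2 * r * Real.cos θ + r ^ 2) =
      (1 - r ^ n) * (1 - r * Real.cos θ) := by
  rw [geom_cos, h, Real.cos_nat_mul_two_pi_sub, Real.cos_nat_mul_two_pi]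
  ring

lemma lam_geom_le (r θ : ℝ) (n k m : ℕ) (h : n * θ = k * (2 * Real.pi))
    (h' : n * Real.pi = m * (2 * Real.pi)) (hr0 : 0 < r) (hr1 : r < 1) :
    ∑ j ∈ Finset.range n, r ^ j * Real.cos (j * Real.pi) ≤
      ∑ j ∈ Finset.range n, r ^ j * Real.cos (j * θ) := by
  have e1 := geom_cos_root r θ n k h
  have e2 := geom_cos_root r Real.pi n m h'
  rw [Real.cos_pi] at e2
  have hc1 := Real.cos_le_one θ
  have hc2 := Real.neg_one_le_cos θ
  set c := Real.cos θ
  have hD : 0 < 1 - 2 * r * c + r ^ 2 := by nlinarith [mul_nonneg hr0.le (sub_nonneg.2 hc1)]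
  have hE : 0 < 1 - 2 * r * (-1) + r ^ 2 := by nlinarith
  rw [← eq_div_iff hD.ne'] at e1
  rw [← eq_div_iff hE.ne'] at e2
  rw [e1, e2, div_le_div_iff₀ hE hD, mul_assoc (1 - r ^ n), mul_assoc (1 - r ^ n)]
  have hp : 0 ≤ 1 - r ^ n := sub_nonneg.2 (pow_le_one₀ hr0.le hr1.le)
  refine mul_le_mul_of_nonneg_left ?_ hp
  have : 0 ≤ (1 + r) * (r * (1 + c) * (1 - r)) := by
    have : 0 ≤ 1 + c := by linarith
    have : 0 ≤ 1 - r := by linarith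
    positivity
  nlinarith

/-- Laplace representation: positivity of power sums transfers to `j ^ (-α)`. -/
lemma transfer (s : Finset ℕ) (hs : ∀ j ∈ s, 0 < j) (a : ℕ → ℝ) (α : ℝ) (hα : 0 < α)
    (H : ∀ r : ℝ, 0 < r → r < 1 → 0 ≤ ∑ j ∈ s, r ^ j * a j) :
    0 ≤ ∑ j ∈ s, (j : ℝ) ^ (-α) * a j := by
  have hG := Real.Gamma_pos_of_pos hα
  have hI : ∀ j ∈ s, ∫ t in Set.Ioi (0 : ℝ), t ^ (α - 1) * Real.exp (-(j * t)) =
      (j : ℝ) ^ (-α) * Real.Gamma α := by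
    intro j hj
    have hj' : (0 : ℝ) < j := by exact_mod_cast hs j hj
    rw [Real.integral_rpow_mul_exp_neg_mul_Ioi hα hj', one_div, Real.inv_rpow hj'.le,
      Real.rpow_neg hj'.le]
  have hint : ∀ j ∈ s, MeasureTheory.Integrable
      (fun t : ℝ => t ^ (α - 1) * Real.exp (-(j * t)))
      (MeasureTheory.volume.restrict (Set.Ioi 0)) := by
    intro j hj
    have hj' : (0 : ℝ) < j := by exact_mod_cast hs j hj
    apply MeasureTheory.Integrable.of_integral_ne_zero
    rw [hI j hj]
    positivity
  have key : (∑ j ∈ s, (j : ℝ) ^ (-α) * a j) * Real.Gamma α =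
      ∫ t in Set.Ioi (0 : ℝ), ∑ j ∈ s, t ^ (α - 1) * Real.exp (-(j * t)) * a j := by
    rw [MeasureTheory.integral_finsetSum _ (fun j hj => (hint j hj).mul_const _),
      Finset.sum_mul]
    refine Finset.sum_congr rfl fun j hj => ?_
    rw [MeasureTheory.integral_mul_const, hI j hj]
    ring
  refine nonneg_of_mul_nonneg_left ?_ hG
  rw [key]
  refine MeasureTheory.setIntegral_nonneg measurableSet_Ioi fun t ht => ?_
  have ht' : (0 : ℝ) < t := ht
  have := H (Real.exp (-t)) (Real.exp_pos _) (by simpa using ht')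
  have e : ∑ j ∈ s, t ^ (α - 1) * Real.exp (-(j * t)) * a j =
      t ^ (α - 1) * ∑ j ∈ s, Real.exp (-t) ^ j * a j := by
    rw [Finset.mul_sum]
    refine Finset.sum_congr rfl fun j _ => ?_
    rw [← Real.exp_nat_mul, mul_assoc]
    congr 3
    ring_nf
  rw [e]
  positivity

/-- for even `n`, the largest eigenvalue is at `k = 0` and the
smallest at `k = n/2`. -/
theorem stmt_1 (n : ℕ) (hn : 2 ≤ n) (hne : Even n) (α : ℝ) (hα : 0 < α)
    (k : ℕ) (hk : k < n) :
    lam α n (n / 2) ≤ lam α n k ∧ lam α n k ≤ lam α n 0 := by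
  have hn0 : (n : ℝ) ≠ 0 := by positivity
  constructor
  · obtain ⟨m, hm⟩ := hne
    have hm2 : n / 2 = m := by omega
    have hmr : (n : ℝ) = m + m := by exact_mod_cast hm
    have hT := transfer (Finset.Icc 1 (n - 1)) (fun j hj => (Finset.mem_Icc.1 hj).1)
      (fun j => Real.cos (j * (2 * Real.pi * k / n)) - Real.cos (j * Real.pi)) α hα ?_
    · rw [hm2]
      unfold lam
      simp only [mul_sub, Finset.sum_sub_distrib] at hT
      have e1 : ∀ j : ℕ, 2 * Real.pi * m * j / n = j * Real.pi := by
        intro j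
        rw [div_eq_iff hn0, hmr]
        ring
      have e2 : ∀ j : ℕ, 2 * Real.pi * k * j / n = j * (2 * Real.pi * k / n) := by
        intro j
        ring
      simp only [e1, e2]
      linarith
    · intro r hr0 hr1
      have h := lam_geom_le r (2 * Real.pi * k / n) n k m (by field_simp) (by rw [hmr]; ring) hr0 hr1
      have hr : Finset.range n = insert 0 (Finset.Icc 1 (n - 1)) := by
        ext j
        simp only [Finset.mem_range, Finset.mem_insert, Finset.mem_Icc]
        omega
      rw [hr, Finset.sum_insert (by simp), Finset.sum_insert (by simp)] at h
      simp only [mul_sub, Finset.sum_sub_distrib]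
      simp only [Nat.cast_zero, zero_mul] at h
      linarith
  · unfold lam
    refine mul_le_mul_of_nonneg_left (Finset.sum_le_sum fun j _ => ?_) (by norm_num)
    refine mul_le_mul_of_nonneg_left ?_ (by positivity)
    simpa using Real.cos_le_one _
end

section
/- Fix a real α > 1 and a real θ with 0 < θ < 2π. Then lim_{n→∞} n^α ∑_{j=0}^∞ e^{ijθ} (j+n)^{−α} = 1/(1 − e^{iθ}); i.e., the Lerch transcendent Φ(z, α, n) = ∑_{j=0}^∞ z^j (j+n)^{−α} with z = e^{iθ} satisfies Φ(z, α, n) ∼ n^{−α}/(1−z) as n → ∞. -/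
theorem abel_step (z : ℂ) (hz : ‖z‖ = 1) (b : ℕ → ℝ) (hb : Summable fun j => ‖b j‖) :
    (1 - z) * ∑' j : ℕ, z ^ j * (b j : ℂ)
      = b 0 - z * ∑' j : ℕ, z ^ j * ((b j - b (j + 1) : ℝ) : ℂ) := by
  have h0 : Summable fun j : ℕ => z ^ j * (b j : ℂ) := by
    apply Summable.of_norm
    simpa [hz] using hb
  have h1 : Summable fun j : ℕ => z ^ j * (b (j + 1) : ℂ) := by
    apply Summable.of_norm
    simpa [hz] using (summable_nat_add_iff 1).2 hb
  have h2 : ∑' j : ℕ, z ^ j * ((b j - b (j + 1) : ℝ) : ℂ)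
      = ∑' j : ℕ, z ^ j * (b j : ℂ) - ∑' j : ℕ, z ^ j * (b (j + 1) : ℂ) := by
    rw [← h0.tsum_sub h1]
    congr 1
    ext j
    push_cast
    ring
  have h3 : ∑' j : ℕ, z ^ j * (b j : ℂ) = b 0 + z * ∑' j : ℕ, z ^ j * (b (j + 1) : ℂ) := by
    rw [h0.tsum_eq_zero_add, ← tsum_mul_left]
    simp [pow_succ', mul_assoc]
  rw [h2]
  linear_combination h3

theorem abel_bound (z : ℂ) (hz : ‖z‖ = 1) (b : ℕ → ℝ) (hb : Summable fun j => ‖b j‖)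
    (hanti : ∀ j, b (j + 1) ≤ b j) (h0 : 0 ≤ b 0) :
    ‖(1 - z) * ∑' j : ℕ, z ^ j * (b j : ℂ)‖ ≤ 2 * b 0 := by
  have hs : Summable b := hb.of_norm
  have hs1 : Summable fun j => b (j + 1) := (summable_nat_add_iff 1).2 hs
  have ht : ∑' j, (b j - b (j + 1)) = b 0 := by
    rw [hs.tsum_sub hs1, hs.tsum_eq_zero_add]
    ring
  have hn : ∀ j, ‖z ^ j * ((b j - b (j + 1) : ℝ) : ℂ)‖ = b j - b (j + 1) := by
    intro j
    rw [norm_mul, norm_pow, hz, one_pow, one_mul, Complex.norm_real, Real.norm_of_nonneg]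
    linarith [hanti j]
  have hD : ‖∑' j : ℕ, z ^ j * ((b j - b (j + 1) : ℝ) : ℂ)‖ ≤ b 0 := by
    rw [← ht, ← tsum_congr hn]
    apply norm_tsum_le_tsum_norm
    simp_rw [hn]
    exact hs.sub hs1
  rw [abel_step z hz b hb]
  calc _ ≤ ‖(b 0 : ℂ)‖ + ‖z * ∑' j : ℕ, z ^ j * ((b j - b (j + 1) : ℝ) : ℂ)‖ := norm_sub_le _ _
    _ ≤ 2 * b 0 := by
      rw [norm_mul, hz, one_mul, Complex.norm_real, Real.norm_of_nonneg h0]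
      linarith

theorem rpow_midpoint (α : ℝ) (hα : 1 < α) (x : ℝ) (hx : 0 < x) :
    (x + 1) ^ (-α) - (x + 2) ^ (-α) ≤ x ^ (-α) - (x + 1) ^ (-α) := by
  have hsq : ∀ y : ℝ, 0 < y → y ^ (-α) = y ^ (-α / 2) * y ^ (-α / 2) := by
    intro y hy
    rw [← Real.rpow_add hy]
    congr 1
    ring
  have h : (x + 1) ^ (-α / 2) * (x + 1) ^ (-α / 2) ≤ x ^ (-α / 2) * (x + 2) ^ (-α / 2) := by
    rw [← Real.mul_rpow (by positivity) (by positivity),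
      ← Real.mul_rpow (by positivity) (by positivity)]
    exact Real.rpow_le_rpow_of_nonpos (by positivity) (by nlinarith) (by linarith)
  rw [hsq x hx, hsq (x + 1) (by positivity), hsq (x + 2) (by positivity)]
  nlinarith [sq_nonneg (x ^ (-α / 2) - (x + 2) ^ (-α / 2))]

/-- for fixed real `α > 1` and `0 < θ < 2π`, the Lerch transcendent
`Φ(e^{iθ}, α, n) = ∑_{j=0}^∞ e^{ijθ} (j+n)^{-α}` satisfies
`lim_{n→∞} n^α Φ(e^{iθ}, α, n) = 1/(1 - e^{iθ})`. -/
theorem stmt_6 (α : ℝ) (hα : 1 < α) (θ : ℝ) (hθ : 0 < θ) (hθ2 : θ < 2 * Real.pi) :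
    Filter.Tendsto
      (fun n : ℕ => (((n : ℝ) ^ α : ℝ) : ℂ) *
        ∑' j : ℕ, Complex.exp ((j : ℂ) * (θ : ℂ) * Complex.I)
          * (((((j : ℝ) + (n : ℝ)) ^ (-α) : ℝ)) : ℂ))
      Filter.atTop
      (nhds (1 / (1 - Complex.exp ((θ : ℂ) * Complex.I)))) := by
  set z := Complex.exp ((θ : ℂ) * Complex.I) with hzdef
  have hz : ‖z‖ = 1 := Complex.norm_exp_ofReal_mul_I θ
  have hz1 : 1 - z ≠ 0 := by
    intro h
    have h1 : Complex.exp ((θ : ℂ) * Complex.I) = 1 := by rw [← hzdef]; linear_combination -h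
    obtain ⟨k, hk⟩ := Complex.exp_eq_one_iff.1 h1
    have hk2 : θ = k * (2 * Real.pi) := by
      have := congrArg Complex.im hk
      simpa using this
    have hp := Real.pi_pos
    have k0 : (0 : ℝ) < k := by
      by_contra hc
      push Not at hc
      nlinarith
    have k1 : (k : ℝ) < 1 := by
      by_contra hc
      push Not at hc
      nlinarith
    have k0' : 0 < k := by exact_mod_cast k0
    have k1' : k < 1 := by exact_mod_cast k1
    omega
  have hexp : ∀ j : ℕ, Complex.exp ((j : ℂ) * (θ : ℂ) * Complex.I) = z ^ j := by
    intro j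
    rw [hzdef, ← Complex.exp_nat_mul, mul_assoc]
  simp_rw [hexp]
  have hlim : Filter.Tendsto (fun n : ℕ => 2 * (1 - ((n : ℝ) / (n + 1)) ^ α))
      Filter.atTop (nhds 0) := by
    have h1 := (tendsto_natCast_div_add_atTop (1 : ℝ)).rpow_const (p := α) (by simp)
    have h2 := (h1.const_sub 1).const_mul 2
    simpa using h2
  have key : ∀ n : ℕ, 1 ≤ n →
      ‖(1 - z) * (1 - (1 - z) * ((((n : ℝ) ^ α : ℝ) : ℂ) *
        ∑' j : ℕ, z ^ j * (((((j : ℝ) + (n : ℝ)) ^ (-α) : ℝ)) : ℂ)))‖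
        ≤ 2 * (1 - ((n : ℝ) / (n + 1)) ^ α) := by
    intro n hn
    have hn0 : (0 : ℝ) < n := by exact_mod_cast hn
    set a : ℕ → ℝ := fun j => ((j : ℝ) + (n : ℝ)) ^ (-α) with ha
    have hsa : Summable a := by
      have := (summable_nat_add_iff n).2 (Real.summable_nat_rpow.2 (show -α < -1 by linarith))
      simpa [ha] using this
    have hsd : Summable fun j => a j - a (j + 1) := hsa.sub ((summable_nat_add_iff 1).2 hsa)
    have hd0 : 0 ≤ a 0 - a (0 + 1) := by
      have : a (0 + 1) ≤ a 0 := by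
        apply Real.rpow_le_rpow_of_nonpos <;> first | positivity | simp
        linarith
      linarith
    have hA := abel_step z hz a hsa.norm
    have hB := abel_bound z hz (fun j => a j - a (j + 1)) hsd.norm (by
      intro j
      have := rpow_midpoint α hα (j + n) (by positivity)
      simp only [ha]
      push_cast
      convert this using 3 <;> ring) hd0
    have hna : (n : ℝ) ^ α * a 0 = 1 := by
      simp [ha, Real.rpow_neg hn0.le]
      field_simp
    have hna1 : (n : ℝ) ^ α * a 1 = ((n : ℝ) / (n + 1)) ^ α := by
      rw [Real.div_rpow hn0.le (by positivity)]
      simp only [ha, Nat.cast_one]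
      rw [Real.rpow_neg (by positivity), add_comm, div_eq_mul_inv]
    have hnaC : (((n : ℝ) ^ α : ℝ) : ℂ) * (a 0 : ℂ) = 1 := by exact_mod_cast hna
    have hP : 0 ≤ (n : ℝ) ^ α := by positivity
    have e : (1 - z) * (1 - (1 - z) * ((((n : ℝ) ^ α : ℝ) : ℂ) * ∑' j : ℕ, z ^ j * (a j : ℂ)))
        = (((n : ℝ) ^ α : ℝ) : ℂ) * (z *
          ((1 - z) * ∑' j : ℕ, z ^ j * ((a j - a (j + 1) : ℝ) : ℂ))) := by
      linear_combination (-(1 - z) * (((n : ℝ) ^ α : ℝ) : ℂ)) * hA - (1 - z) * hnaC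
    rw [e, norm_mul, norm_mul, hz, one_mul, Complex.norm_real, Real.norm_of_nonneg hP]
    calc _ ≤ (n : ℝ) ^ α * (2 * (a 0 - a (0 + 1))) := mul_le_mul_of_nonneg_left hB hP
      _ = 2 * ((n : ℝ) ^ α * a 0 - (n : ℝ) ^ α * a 1) := by ring_nf
      _ = _ := by rw [hna, hna1]
  have hk := squeeze_zero_norm' (Filter.eventually_atTop.2 ⟨1, key⟩) hlim
  have h3 := ((hk.const_mul (1 - z)⁻¹).const_sub 1).const_mul (1 - z)⁻¹
  simp only [mul_zero, sub_zero, mul_one] at h3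
  rw [one_div]
  refine h3.congr fun n => ?_
  field_simp
  ring
end

section
/- Fix a real α with 1 < α < 3/2. For even integers n, define λ_k(α,n) = 2 ∑_{j=1}^{n−1} j^{−α} cos(2πkj/n) and Δ_n(α) = (λ_0(α,n) − λ_1(α,n)) / (λ_0(α,n) − λ_{n/2}(α,n)). Then lim_{n→∞, n even} √n · Δ_n(α) = +∞; i.e., the spectral condition Δ_n(α) ≥ c n^{−1/2} holds for every constant c > 0 once n is large enough. -/
/-- The rescaled spectral gap `Δ_n(α) = (λ_0 - λ_1)/(λ_0 - λ_{n/2})` for even `n`. -/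
noncomputable def gap (α : ℝ) (n : ℕ) : ℝ :=
  (lam α n 0 - lam α n 1) / (lam α n 0 - lam α n (n / 2))

theorem aux_sum (m : ℕ) (hm : 0 < m) :
    ∑ j ∈ Finset.Icc 1 (2 * m - 1), (1 - Real.cos (2 * Real.pi * j / (2 * m : ℕ))) = 2 * m := by
  have hm' : (m : ℝ) ≠ 0 := by positivity
  have hsub : ∑ j ∈ Finset.Icc 1 (2 * m - 1), (1 - Real.cos (2 * Real.pi * j / (2 * m : ℕ)))
      = ∑ j ∈ Finset.range (m + m), (1 - Real.cos (2 * Real.pi * j / (2 * m : ℕ))) := by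
    apply Finset.sum_subset
    · intro j hj
      simp only [Finset.mem_Icc, Finset.mem_range] at *
      omega
    · intro j hj hj'
      simp only [Finset.mem_Icc, Finset.mem_range] at *
      have : j = 0 := by omega
      subst this
      simp
  rw [hsub, Finset.sum_range_add, ← Finset.sum_add_distrib]
  have : ∀ j ∈ Finset.range m, (1 - Real.cos (2 * Real.pi * j / (2 * m : ℕ)))
      + (1 - Real.cos (2 * Real.pi * (m + j : ℕ) / (2 * m : ℕ))) = 2 := by
    intro j _
    have : 2 * Real.pi * (m + j : ℕ) / (2 * m : ℕ)
        = 2 * Real.pi * j / (2 * m : ℕ) + Real.pi := by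
      push_cast
      field_simp
      ring
    rw [this, Real.cos_add_pi]
    ring
  rw [Finset.sum_congr rfl this]
  simp
  ring

theorem lam_diff (α : ℝ) (n k : ℕ) : lam α n 0 - lam α n k =
    2 * ∑ j ∈ Finset.Icc 1 (n - 1),
      (j : ℝ) ^ (-α) * (1 - Real.cos (2 * Real.pi * k * j / n)) := by
  unfold lam
  rw [← mul_sub, ← Finset.sum_sub_distrib]
  congr 1
  apply Finset.sum_congr rfl
  intro j _
  simp
  ring

theorem num_bound (α : ℝ) (h1 : 1 < α) (m : ℕ) (hm : 0 < m) :
    2 * ((2 * m : ℕ) : ℝ) ^ (1 - α) ≤ lam α (2 * m) 0 - lam α (2 * m) 1 := by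
  have hpos : (0 : ℝ) < ((2 * m : ℕ) : ℝ) := by positivity
  rw [lam_diff]
  have : ((2 * m : ℕ) : ℝ) ^ (1 - α) = ∑ j ∈ Finset.Icc 1 (2 * m - 1),
      ((2 * m : ℕ) : ℝ) ^ (-α) * (1 - Real.cos (2 * Real.pi * j / (2 * m : ℕ))) := by
    rw [← Finset.mul_sum, aux_sum m hm, sub_eq_neg_add, Real.rpow_add hpos, Real.rpow_one]
    push_cast
    ring
  rw [this]
  apply mul_le_mul_of_nonneg_left _ (by norm_num)
  apply Finset.sum_le_sum
  intro j hj
  rw [Finset.mem_Icc] at hj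
  rw [Nat.cast_one, mul_one]
  apply mul_le_mul_of_nonneg_right _ (sub_nonneg.2 (Real.cos_le_one _))
  apply Real.rpow_le_rpow_of_nonpos
  · exact_mod_cast hj.1
  · exact_mod_cast (by omega : j ≤ 2 * m)
  · linarith

theorem den_bound (α : ℝ) (h1 : 1 < α) (m : ℕ) :
    lam α (2 * m) 0 - lam α (2 * m) (2 * m / 2) ≤ 4 * ∑' j : ℕ, (j : ℝ) ^ (-α) := by
  rw [lam_diff]
  have hs : Summable (fun j : ℕ => (j : ℝ) ^ (-α)) := by
    rw [Real.summable_nat_rpow]; linarith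
  have h := hs.sum_le_tsum (Finset.Icc 1 (2 * m - 1)) (fun j _ => by positivity)
  have : ∑ j ∈ Finset.Icc 1 (2 * m - 1),
      (j : ℝ) ^ (-α) * (1 - Real.cos (2 * Real.pi * (2 * m / 2 : ℕ) * j / (2 * m : ℕ)))
      ≤ ∑ j ∈ Finset.Icc 1 (2 * m - 1), (j : ℝ) ^ (-α) * 2 := by
    apply Finset.sum_le_sum
    intro j _
    apply mul_le_mul_of_nonneg_left _ (by positivity)
    linarith [Real.neg_one_le_cos (2 * Real.pi * (2 * m / 2 : ℕ) * j / (2 * m : ℕ))]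
  rw [← Finset.sum_mul] at this
  linarith

theorem den_pos (α : ℝ) (m : ℕ) (hm : 0 < m) :
    0 < lam α (2 * m) 0 - lam α (2 * m) (2 * m / 2) := by
  rw [lam_diff]
  apply mul_pos (by norm_num)
  apply Finset.sum_pos'
  · intro j _
    exact mul_nonneg (by positivity) (sub_nonneg.2 (Real.cos_le_one _))
  · refine ⟨1, by simp; omega, ?_⟩
    have hm' : (m : ℝ) ≠ 0 := by positivity
    have : 2 * Real.pi * (2 * m / 2 : ℕ) * (1 : ℕ) / (2 * m : ℕ) = Real.pi := by
      rw [Nat.mul_div_cancel_left m (by norm_num)]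
      push_cast
      field_simp
    rw [this, Real.cos_pi]
    norm_num

/-- for `1 < α < 3/2`, `√n · Δ_n(α) → +∞` along even `n`; hence the
spectral condition `Δ_n(α) ≥ c n^{-1/2}` holds for every `c > 0` for large `n`. -/
theorem stmt_9 (α : ℝ) (h1 : 1 < α) (h2 : α < 3 / 2) :
    Filter.Tendsto (fun n : ℕ => Real.sqrt ((2 * n : ℕ) : ℝ) * gap α (2 * n))
      Filter.atTop Filter.atTop := by
  set C : ℝ := 4 * ∑' j : ℕ, (j : ℝ) ^ (-α) with hC
  have hCpos : 0 < C := lt_of_lt_of_le (den_pos α 1 one_pos) (den_bound α h1 1)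
  have hlim : Filter.Tendsto (fun n : ℕ => (2 / C) * ((2 * n : ℕ) : ℝ) ^ (3 / 2 - α))
      Filter.atTop Filter.atTop := by
    apply Filter.Tendsto.const_mul_atTop (by positivity)
    apply (tendsto_rpow_atTop (by linarith)).comp
    apply tendsto_natCast_atTop_atTop.comp
    exact Filter.tendsto_id.const_mul_atTop' (by norm_num)
  apply Filter.tendsto_atTop_mono' _ _ hlim
  filter_upwards [Filter.eventually_gt_atTop 0] with m hm
  have hpos : (0 : ℝ) < ((2 * m : ℕ) : ℝ) := by positivity
  have hg : 2 * ((2 * m : ℕ) : ℝ) ^ (1 - α) / C ≤ gap α (2 * m) := by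
    unfold gap
    have hn := num_bound α h1 m hm
    exact div_le_div₀ (le_trans (by positivity) hn) hn (den_pos α m hm) (den_bound α h1 m)
  calc (2 / C) * ((2 * m : ℕ) : ℝ) ^ (3 / 2 - α)
      = Real.sqrt ((2 * m : ℕ) : ℝ) * (2 * ((2 * m : ℕ) : ℝ) ^ (1 - α) / C) := by
        rw [Real.sqrt_eq_rpow, show (3 / 2 - α) = 1 / 2 + (1 - α) by ring, Real.rpow_add hpos]
        ring
    _ ≤ _ := mul_le_mul_of_nonneg_left hg (Real.sqrt_nonneg _)
end

section
/- Let α be a real number with 1 < α < 3 and α ≠ 2. Define f(α) = (4 − 2^{2−α}) ζ(α) and g_0(α) = −2^α π^{α−1} sin(απ/2) Γ(1−α). Then |f(α)/g_0(α)| < 1; equivalently, |(4 − 2^{2−α}) ζ(α)| < |2^α π^{α−1} sin(απ/2) Γ(1−α)|. -/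
/-- The Riemann zeta function at a real argument. -/
noncomputable def rzeta (x : ℝ) : ℝ := (riemannZeta (x : ℂ)).re

/-- `f(α) = (4 - 2^{2-α}) ζ(α)`. -/
noncomputable def fα (α : ℝ) : ℝ := (4 - (2 : ℝ) ^ (2 - α)) * rzeta α

/-- `g₀(α) = -2^α π^{α-1} sin(απ/2) Γ(1-α)`. -/
noncomputable def g0 (α : ℝ) : ℝ :=
  -(2 : ℝ) ^ α * Real.pi ^ (α - 1) * Real.sin (α * Real.pi / 2) * Real.Gamma (1 - α)

theorem aux_zeta (s : ℝ) (hs : 1 < s) : 0 ≤ rzeta s ∧ rzeta s ≤ 1 + 1 / (s - 1) := by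
  have h : riemannZeta (s : ℂ) = ((∑' n : ℕ, 1 / (n + 1 : ℝ) ^ s : ℝ) : ℂ) := by
    rw [zeta_eq_tsum_one_div_nat_add_one_cpow (by simpa using hs), Complex.ofReal_tsum]
    congr 1 with n
    push_cast
    rw [Complex.ofReal_cpow (by positivity)]
    norm_cast
  have h2 : rzeta s = ∑' n : ℕ, 1 / (n + 1 : ℝ) ^ s := by
    rw [rzeta, h, Complex.ofReal_re]
  have h3 := ZetaAsymptotics.zeta_limit_aux1 hs
  have h4 : 0 ≤ ZetaAsymptotics.termTSum s :=
    tsum_nonneg fun n => ZetaAsymptotics.term_nonneg _ _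
  rw [← h2] at h3
  constructor
  · rw [h2]
    exact tsum_nonneg fun n => by positivity
  · nlinarith [mul_nonneg (by linarith : (0:ℝ) ≤ s) h4]

theorem aux_gamma_le_one (x : ℝ) (h1 : 1 ≤ x) (h2 : x ≤ 2) : Real.Gamma x ≤ 1 := by
  have h := (And.right Real.convexOn_Gamma) (Set.mem_Ioi.2 (zero_lt_one : (0:ℝ) < 1))
    (Set.mem_Ioi.2 (zero_lt_two : (0:ℝ) < 2))
    (sub_nonneg.2 h2) (sub_nonneg.2 h1) (by ring)
  have e : (2 - x) • (1:ℝ) + (x - 1) • (2:ℝ) = x := by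
    simp only [smul_eq_mul]; ring
  rw [e, Real.Gamma_one, Real.Gamma_two] at h
  simp only [smul_eq_mul] at h
  linarith

theorem aux_exp_lt (x : ℝ) (hx : 0 ≤ x) : Real.exp x ≤ Real.pi ^ x := by
  rw [← Real.exp_one_rpow]
  exact Real.rpow_le_rpow (Real.exp_pos _).le
    (by linarith [Real.exp_one_lt_d9, Real.pi_gt_three]) hx

theorem aux_key (e : ℝ) (h0 : 0 < e) (h2 : e < 2) :
    (1 + e) * Real.Gamma (1 + e) < Real.pi ^ e := by
  rcases le_total e 1 with h | h
  · have a := aux_gamma_le_one (1 + e) (by linarith) (by linarith)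
    have b := Real.add_one_lt_exp h0.ne'
    have c := aux_exp_lt e h0.le
    nlinarith
  · have a := aux_gamma_le_one e h h2.le
    have b := Real.quadratic_le_exp_of_nonneg (x := e - 1) (by linarith)
    have c := aux_exp_lt (e - 1) (by linarith)
    have d : Real.pi ^ e = Real.pi * Real.pi ^ (e - 1) := by
      rw [Real.rpow_sub_one Real.pi_ne_zero]
      field_simp
    have g : Real.Gamma (1 + e) = e * Real.Gamma e := by
      rw [add_comm, Real.Gamma_add_one h0.ne']
    rw [d, g]
    have p : 0 < Real.pi ^ (e - 1) := Real.rpow_pos_of_pos Real.pi_pos _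
    calc (1 + e) * (e * Real.Gamma e) = (1 + e) * e * Real.Gamma e := by ring
      _ ≤ (1 + e) * e * 1 := by gcongr
      _ < 3 * Real.pi ^ (e - 1) := by nlinarith
      _ ≤ Real.pi * Real.pi ^ (e - 1) := by gcongr; exact Real.pi_gt_three.le

theorem aux_f (e : ℝ) (h0 : 0 < e) :
    |fα (1 + e)| * e ≤ 2 * 2 ^ e * (1 + e) := by
  obtain ⟨z0, z1⟩ := aux_zeta (1 + e) (by linarith)
  have p : (0:ℝ) < 2 ^ e := by positivity
  have p1 : (1:ℝ) ≤ 2 ^ e := Real.one_le_rpow (by norm_num) h0.le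
  have q : (2:ℝ) ^ (2 - (1 + e)) = 2 / 2 ^ e := by
    rw [show (2:ℝ) - (1 + e) = 1 - e by ring, Real.rpow_sub (by norm_num), Real.rpow_one]
  have r : 2 / (2:ℝ) ^ e ≤ 2 := by
    rw [div_le_iff₀ p]; linarith
  have t : 4 - 2 / (2:ℝ) ^ e ≤ 2 * 2 ^ e := by
    have : 4 - 2 * (2:ℝ) ^ e ≤ 2 / 2 ^ e := by
      rw [le_div_iff₀ p]; nlinarith [sq_nonneg ((2:ℝ) ^ e - 1)]
    linarith
  have w : rzeta (1 + e) * e ≤ 1 + e := by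
    calc rzeta (1 + e) * e ≤ (1 + 1 / (1 + e - 1)) * e := by gcongr
      _ = 1 + e := by rw [add_sub_cancel_left]; field_simp; ring
  rw [fα, q, abs_of_nonneg (mul_nonneg (by linarith) z0), mul_assoc]
  exact mul_le_mul t w (by positivity) (by positivity)

/-- Lemma 3 of the SM: `|f(α)/g₀(α)| < 1` for `1 < α < 3`, `α ≠ 2`. -/
theorem stmt_12 (α : ℝ) (h1 : 1 < α) (h3 : α < 3) (h2 : α ≠ 2) :
    |fα α / g0 α| < 1 := by
  obtain ⟨e, rfl⟩ : ∃ e, α = 1 + e := ⟨α - 1, by ring⟩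
  have h0 : 0 < e := by linarith
  by_cases hS : Real.sin ((1 + e) * Real.pi / 2) = 0
  · simp [g0, hS]
  have hpi := Real.pi_pos
  have hC : Real.cos ((1 + e) * Real.pi / 2) = -Real.sin (e * Real.pi / 2) := by
    rw [← Real.cos_add_pi_div_two]; congr 1; ring
  have hs0 : 0 < Real.sin (e * Real.pi / 2) :=
    Real.sin_pos_of_pos_of_lt_pi (by positivity) (by nlinarith)
  have hs1 : Real.sin (e * Real.pi / 2) < e * Real.pi / 2 := Real.sin_lt (by positivity)
  have hsin : Real.sin (Real.pi * (1 + e)) =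
      -(2 * Real.sin ((1 + e) * Real.pi / 2) * Real.sin (e * Real.pi / 2)) := by
    rw [show Real.pi * (1 + e) = 2 * ((1 + e) * Real.pi / 2) by ring, Real.sin_two_mul, hC]
    ring
  have hG := Real.Gamma_mul_Gamma_one_sub (1 + e)
  rw [hsin] at hG
  have hGp : 0 < Real.Gamma (1 + e) := Real.Gamma_pos_of_pos (by linarith)
  have hkey := aux_key e h0 (by linarith)
  have hf := aux_f e h0
  have hg : g0 (1 + e) * (2 * Real.sin (e * Real.pi / 2) * Real.Gamma (1 + e)) =
      2 * Real.pi * (2 ^ e * Real.pi ^ e) := by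
    have e1 : (2:ℝ) ^ (1 + e) = 2 * 2 ^ e := by
      rw [Real.rpow_add (by norm_num), Real.rpow_one]
    rw [g0, add_sub_cancel_left, e1]
    calc _ = -(2 * 2 ^ e) * Real.pi ^ e * (2 * Real.sin ((1 + e) * Real.pi / 2) *
          Real.sin (e * Real.pi / 2)) * (Real.Gamma (1 + e) * Real.Gamma (1 - (1 + e))) := by ring
      _ = _ := by
        rw [hG]
        have := hs0.ne'
        field_simp
  set s := Real.sin (e * Real.pi / 2)
  set G := Real.Gamma (1 + e)
  have hD : 0 < 2 * s * G := by positivity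
  have p2 : (0:ℝ) < 2 ^ e := by positivity
  have hgpos : 0 < g0 (1 + e) := by
    refine pos_of_mul_pos_left ?_ hD.le
    rw [hg]; positivity
  rw [abs_div, abs_of_pos hgpos, div_lt_one hgpos]
  refine lt_of_mul_lt_mul_right ?_ hD.le
  rw [hg]
  calc |fα (1 + e)| * (2 * s * G) ≤ |fα (1 + e)| * (2 * (e * Real.pi / 2) * G) := by gcongr
    _ = (|fα (1 + e)| * e) * (Real.pi * G) := by ring
    _ ≤ (2 * 2 ^ e * (1 + e)) * (Real.pi * G) := by gcongr
    _ = 2 * Real.pi * (2 ^ e * ((1 + e) * G)) := by ring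
    _ < 2 * Real.pi * (2 ^ e * Real.pi ^ e) := by gcongr
end

section
/- Let α be a real number with 1 < α < 3. Then |(4 − 2^{2−α}) ζ(1−α)| < 1, where ζ(1−α) is the analytically continued Riemann zeta function evaluated at the real point 1−α ∈ (−2, 0). -/
theorem zeta_bd (s : ℝ) (hs : 1 < s) : ‖riemannZeta (s : ℂ)‖ ≤ 1 / (s - 1) + 1 := by
  have h := ZetaAsymptotics.zeta_limit_aux1 hs
  have h0 : 0 ≤ ZetaAsymptotics.termTSum s :=
    tsum_nonneg fun n => ZetaAsymptotics.term_nonneg _ _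
  have h2 : riemannZeta (s : ℂ) = ((∑' n : ℕ, 1 / ((n : ℝ) + 1) ^ s : ℝ) : ℂ) := by
    rw [zeta_eq_tsum_one_div_nat_add_one_cpow (by simpa using hs), Complex.ofReal_tsum]
    congr 1
    ext n
    rw [Complex.ofReal_div, Complex.ofReal_cpow (by positivity)]
    push_cast
    rfl
  have hp : 0 ≤ ∑' n : ℕ, 1 / ((n : ℝ) + 1) ^ s := tsum_nonneg fun n => by positivity
  rw [h2, Complex.norm_real, Real.norm_of_nonneg hp]
  have : (∑' n : ℕ, 1 / ((n : ℝ) + 1) ^ s) = ∑' n : ℕ, 1 / (↑(n + 1) : ℝ) ^ s := by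
    push_cast; rfl
  have h4 := mul_nonneg (show (0:ℝ) ≤ s by linarith) h0
  first
  | linarith
  | (rw [this]; linarith)

theorem gamma_bd (s : ℝ) (h1 : 1 ≤ s) (h2 : s ≤ 2) : Real.Gamma s ≤ 1 := by
  have := Real.convexOn_Gamma.2 (show (1:ℝ) ∈ Set.Ioi 0 by simp) (show (2:ℝ) ∈ Set.Ioi 0 by simp)
    (show 0 ≤ 2 - s by linarith) (show 0 ≤ s - 1 by linarith) (by ring)
  simp only [smul_eq_mul, Real.Gamma_one, Real.Gamma_two] at this
  rw [show (2 - s) * 1 + (s - 1) * 2 = s by ring] at this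
  linarith

theorem main_bd (s : ℝ) (h0 : 0 < s) (h2 : s < 2) :
    (1 + s) * Real.Gamma (1 + s) < Real.pi ^ s := by
  have hpi := Real.pi_gt_three
  have he : Real.exp 1 < 3 := by have := Real.exp_one_lt_d9; linarith
  have h3 : (3:ℝ) ^ s < Real.pi ^ s := Real.rpow_lt_rpow (by norm_num) hpi h0
  have key : ∀ t : ℝ, 0 ≤ t → 1 + t ≤ (3:ℝ) ^ t := fun t ht => by
    have h5 : Real.exp t ≤ (3:ℝ) ^ t := by
      rw [← Real.exp_one_rpow]
      exact Real.rpow_le_rpow (Real.exp_pos _).le he.le ht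
    linarith [Real.add_one_le_exp t]
  rcases le_total s 1 with h | h
  · have := gamma_bd (1 + s) (by linarith) (by linarith)
    nlinarith [key s h0.le]
  · have g := gamma_bd s h h2.le
    have k := key (s - 1) (by linarith)
    rw [Real.rpow_sub_one (by norm_num)] at k
    rw [add_comm 1 s, Real.Gamma_add_one h0.ne']
    have : (s + 1) * (s * Real.Gamma s) ≤ (s + 1) * (s * 1) := by gcongr
    nlinarith

theorem stmt_13 (α : ℝ) (h1 : 1 < α) (h3 : α < 3) :
    |(4 - (2 : ℝ) ^ (2 - α)) * rzeta (1 - α)| < 1 := by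
  have hpi := Real.pi_gt_three
  obtain ⟨s, rfl⟩ : ∃ s, α = 1 + s := ⟨α - 1, by ring⟩
  have h0 : 0 < s := by linarith
  have hm := main_bd s h0 (by linarith)
  have hG : 0 < Real.Gamma (1 + s) := Real.Gamma_pos_of_pos (by linarith)
  have hz := zeta_bd (1 + s) h1
  have hfe := riemannZeta_one_sub (s := ((1 + s : ℝ) : ℂ))
    (fun n h => by
      have : (1 + s : ℝ) = -n := by exact_mod_cast h
      have : (0:ℝ) ≤ n := n.cast_nonneg
      linarith)
    (fun h => by
      have : (1 + s : ℝ) = 1 := by exact_mod_cast h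
      linarith)
  have hc : ‖Complex.cos ((Real.pi : ℂ) * ((1 + s : ℝ) : ℂ) / 2)‖ ≤ Real.pi * s / 2 := by
    rw [show (Real.pi : ℂ) * ((1 + s : ℝ) : ℂ) / 2 = ((Real.pi * s / 2 + Real.pi / 2 : ℝ) : ℂ) by
      push_cast; ring, ← Complex.ofReal_cos, Complex.norm_real, Real.cos_add_pi_div_two, norm_neg,
      Real.norm_eq_abs]
    refine Real.abs_sin_le_abs.trans (le_of_eq (abs_of_nonneg (by positivity)))
  have hpw : ‖(2 * (Real.pi : ℂ)) ^ (-((1 + s : ℝ) : ℂ))‖ = (2 * Real.pi) ^ (-(1 + s)) := by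
    rw [show (2 * (Real.pi : ℂ)) = ((2 * Real.pi : ℝ) : ℂ) by push_cast; rfl,
      Complex.norm_cpow_eq_rpow_re_of_pos (by positivity)]
    simp
  have hr : |rzeta (1 - (1 + s))| ≤
      2 * (2 * Real.pi) ^ (-(1 + s)) * Real.Gamma (1 + s) * (Real.pi * s / 2) * (1 / s + 1) := by
    unfold rzeta
    refine (Complex.abs_re_le_norm _).trans ?_
    rw [Complex.ofReal_sub, Complex.ofReal_one, hfe, norm_mul, norm_mul, norm_mul, norm_mul, hpw,
      Complex.Gamma_ofReal, Complex.norm_real, Real.norm_of_nonneg hG.le]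
    rw [add_sub_cancel_left] at hz
    simp only [Complex.norm_ofNat]
    gcongr
  have hP : 0 < Real.pi ^ s := by positivity
  have hT : 0 < (2:ℝ) ^ s := by positivity
  have hT1 : 1 < (2:ℝ) ^ s := Real.one_lt_rpow (by norm_num) h0
  have e1 : (2 * Real.pi) ^ (-(1 + s)) = 1 / (2 * Real.pi * (2 ^ s * Real.pi ^ s)) := by
    rw [Real.rpow_neg (by positivity), Real.rpow_add (by positivity), Real.rpow_one,
      Real.mul_rpow (by norm_num) (by positivity), one_div]
  have e2 : (2:ℝ) ^ (2 - (1 + s)) = 2 / 2 ^ s := by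
    rw [show 2 - (1 + s) = 1 - s by ring, Real.rpow_sub (by norm_num), Real.rpow_one]
  have hA : 0 < 4 - 2 / (2:ℝ) ^ s := by
    have : 2 / (2:ℝ) ^ s < 2 := by rw [div_lt_iff₀ hT]; linarith
    linarith
  have hB : 4 - 2 / (2:ℝ) ^ s ≤ 2 * 2 ^ s := by
    rw [sub_le_iff_le_add, ← sub_nonneg]
    have : 2 * (2:ℝ) ^ s + 2 / 2 ^ s - 4 = 2 * (2 ^ s - 1) ^ 2 / 2 ^ s := by
      field_simp; ring
    rw [this]; positivity
  rw [abs_mul, e2, abs_of_pos hA]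
  calc _ ≤ (2 * 2 ^ s) * (2 * (2 * Real.pi) ^ (-(1 + s)) * Real.Gamma (1 + s) *
        (Real.pi * s / 2) * (1 / s + 1)) := by gcongr
    _ = ((1 + s) * Real.Gamma (1 + s)) / Real.pi ^ s := by
      rw [e1]; field_simp
    _ < 1 := by rw [div_lt_one hP]; exact hm
end

section
/- Let α be a real number with 1 < α < 2. Then the series ∑_{m=1}^∞ 2 (−1)^{m+1} ζ(α − 2m) π^{2m} / (2m)! converges and equals (4 − 2^{2−α}) ζ(α) + 2 π^{α−1} sin(απ/2) Γ(1−α), where ζ(α−2m) denotes the analytically continued Riemann zeta function at the negative real point α − 2m. -/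
open Complex HurwitzZeta Filter Topology

lemma hd_cpow (p : ℂ) {x : ℝ} (hx : 0 < x) :
    HasDerivAt (fun y : ℝ => (y : ℂ) ^ p) (p * (x : ℂ) ^ (p - 1)) x := by
  have h := ((hasDerivAt_id (x : ℂ)).cpow_const (c := p) (Or.inl (by simpa using hx))).comp_ofReal
  simpa using h

lemma second_diff (p : ℂ) (hp : p.re ≤ 2) {N : ℝ} (hN : 1 ≤ N) :
    ‖(((N - 1 / 2 : ℝ) : ℂ) ^ p + ((N + 1 / 2 : ℝ) : ℂ) ^ p) / 2 - (N : ℂ) ^ p‖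
      ≤ ‖p‖ * ‖p - 1‖ * (N / 2) ^ (p.re - 2) := by
  set K : ℝ := (N / 2) ^ (p.re - 2) with hK
  have hK0 : 0 ≤ K := by positivity
  have h1 : ∀ h ∈ Set.Icc (0 : ℝ) (1 / 2),
      ‖p * ((N + h : ℝ) : ℂ) ^ (p - 1) - p * ((N - h : ℝ) : ℂ) ^ (p - 1)‖ ≤ ‖p‖ * ‖p - 1‖ * K := by
    intro h hh
    have := norm_image_sub_le_of_norm_deriv_le_segment' (a := N - h) (b := N + h)
      (f := fun y : ℝ => p * (y : ℂ) ^ (p - 1))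
      (f' := fun y : ℝ => p * ((p - 1) * (y : ℂ) ^ (p - 1 - 1)))
      (C := ‖p‖ * ‖p - 1‖ * K) ?_ ?_ (N + h) ⟨by linarith [hh.1], le_rfl⟩
    · refine this.trans ?_
      have : N + h - (N - h) ≤ 1 := by linarith [hh.2]
      exact mul_le_of_le_one_right (by positivity) this
    · intro x hx
      exact ((hd_cpow (p - 1) (by linarith [hx.1, hh.2])).const_mul p).hasDerivWithinAt
    · intro x hx
      have hx0 : N / 2 ≤ x := by linarith [hx.1, hh.2]
      have hx1 : 0 < x := by linarith
      rw [norm_mul, norm_mul, norm_cpow_eq_rpow_re_of_pos hx1, ← mul_assoc]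
      have : (p - 1 - 1).re = p.re - 2 := by simp; ring
      rw [this]
      gcongr
      exact Real.rpow_le_rpow_of_nonpos (by linarith) hx0 (by linarith)
  have h2 := norm_image_sub_le_of_norm_deriv_le_segment' (a := 0) (b := 1 / 2)
      (f := fun y : ℝ => ((N + y : ℝ) : ℂ) ^ p + ((N - y : ℝ) : ℂ) ^ p)
      (f' := fun y : ℝ => p * ((N + y : ℝ) : ℂ) ^ (p - 1) - p * ((N - y : ℝ) : ℂ) ^ (p - 1))
      (C := ‖p‖ * ‖p - 1‖ * K) ?_ (fun x hx => h1 x ⟨hx.1, hx.2.le⟩) (1 / 2)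
      ⟨by norm_num, le_rfl⟩
  · have e : (((N - 1 / 2 : ℝ) : ℂ) ^ p + ((N + 1 / 2 : ℝ) : ℂ) ^ p) / 2 - (N : ℂ) ^ p =
      (1 / 2 : ℂ) * ((((N + 1 / 2 : ℝ) : ℂ) ^ p + ((N - 1 / 2 : ℝ) : ℂ) ^ p) -
        (((N + 0 : ℝ) : ℂ) ^ p + ((N - 0 : ℝ) : ℂ) ^ p)) := by
      simp only [add_zero, sub_zero]; ring
    rw [e, norm_mul]
    have h3 : ‖(1 / 2 : ℂ)‖ = 1 / 2 := by norm_num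
    rw [h3]
    have : 0 ≤ ‖p‖ * ‖p - 1‖ * K := by positivity
    linarith
  · intro x hx
    have a := (hd_cpow p (x := N + x) (by linarith [hx.1])).scomp x ((hasDerivAt_id x).const_add N)
    have b := (hd_cpow p (x := N - x) (by linarith [hx.2])).scomp x ((hasDerivAt_id x).const_sub N)
    have := (a.add b).hasDerivWithinAt (s := Set.Icc 0 (1 / 2))
    have e : p * ((N + x : ℝ) : ℂ) ^ (p - 1) - p * ((N - x : ℝ) : ℂ) ^ (p - 1) =
      (1 : ℝ) • (p * ((N + x : ℝ) : ℂ) ^ (p - 1)) + (-1 : ℝ) • (p * ((N - x : ℝ) : ℂ) ^ (p - 1)) := by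
      rw [one_smul, neg_one_smul, sub_eq_add_neg]
    beta_reduce
    rw [e]
    exact this

/-- the terms -/
noncomputable def tm (n : ℕ) (s : ℂ) : ℂ :=
  (((n + 1 - 1 / 2 : ℝ) : ℂ) ^ (-s) + ((n + 1 + 1 / 2 : ℝ) : ℂ) ^ (-s)) / 2
    - ((n + 1 : ℝ) : ℂ) ^ (-s)

lemma tm_hasSum_of_one_lt {s : ℂ} (hs : 1 < s.re) :
    HasSum (fun n => tm n s) (hurwitzZetaEven ((1 / 2 : ℝ) : UnitAddCircle) s
      - hurwitzZetaEven 0 s - (1 / 2) * ((1 / 2 : ℝ) : ℂ) ^ (-s)) := by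
  have hz : HasSum (fun n : ℕ => ((n + 1 : ℝ) : ℂ) ^ (-s)) (hurwitzZetaEven 0 s) := by
    have h := hasSum_nat_hurwitzZetaEven_of_mem_Icc (a := 1) (by simp) hs
    have h' := hasSum_nat_hurwitzZetaEven_of_mem_Icc (a := 0) (by simp) hs
    have e : ((1 : ℝ) : UnitAddCircle) = 0 := by simpa using AddCircle.coe_period (1 : ℝ)
    have h0 : (s : ℂ) ≠ 0 := by rintro rfl; simp at hs; linarith
    have hs1 : Summable (fun n : ℕ => 1 / (n : ℂ) ^ s) := Complex.summable_one_div_nat_cpow.2 hs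
    have z := hurwitzZetaEven_zero ▸ zeta_eq_tsum_one_div_nat_add_one_cpow hs
    rw [z]
    have hs2 := ((summable_nat_add_iff 1).2 hs1).hasSum
    simpa [cpow_neg] using hs2
  have hh : HasSum (fun n : ℕ => ((n + 1 / 2 : ℝ) : ℂ) ^ (-s))
      (hurwitzZetaEven ((1 / 2 : ℝ) : UnitAddCircle) s) := by
    refine (hasSum_nat_hurwitzZetaEven_of_mem_Icc (a := 1 / 2) (by constructor <;> norm_num) hs).congr_fun ?_
    intro n
    rw [show ((n : ℂ) + 1 - ((1 / 2 : ℝ) : ℂ)) = n + ((1 / 2 : ℝ) : ℂ) by push_cast; ring]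
    rw [cpow_neg]; push_cast; ring
  have hh' := (hasSum_nat_add_iff' 1).2 hh
  have := ((hh.add hh').div_const 2).sub hz
  have hv : hurwitzZetaEven ((1 / 2 : ℝ) : UnitAddCircle) s
      - hurwitzZetaEven 0 s - (1 / 2) * ((1 / 2 : ℝ) : ℂ) ^ (-s) =
      (hurwitzZetaEven ((1 / 2 : ℝ) : UnitAddCircle) s + (hurwitzZetaEven ((1 / 2 : ℝ) : UnitAddCircle) s
        - ∑ i ∈ Finset.range 1, ((i + 1 / 2 : ℝ) : ℂ) ^ (-s))) / 2 - hurwitzZetaEven 0 s := by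
    rw [Finset.sum_range_one, Nat.cast_zero, zero_add]; ring
  rw [hv]
  refine this.congr_fun fun n => ?_
  unfold tm
  rw [show (n + 1 - 1 / 2 : ℝ) = n + 1 / 2 by ring,
      show (((n + 1 : ℕ) : ℝ) + 1 / 2 : ℝ) = n + 1 + 1 / 2 by push_cast; ring]

lemma tm_hasSum {s : ℂ} (hs : -1 < s.re) :
    HasSum (fun n => tm n s) (hurwitzZetaEven ((1 / 2 : ℝ) : UnitAddCircle) s
      - hurwitzZetaEven 0 s - (1 / 2) * ((1 / 2 : ℝ) : ℂ) ^ (-s)) := by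
  obtain ⟨σ, hσ1, hσ2⟩ := exists_between (lt_min hs (by norm_num : (-1 : ℝ) < 0))
  have hσs := lt_of_lt_of_le hσ2 (min_le_left _ _)
  have hσ0 := lt_of_lt_of_le hσ2 (min_le_right _ _)
  set R : ℝ := ‖s‖ + 3 with hR
  have hR0 : 3 ≤ R := by have := norm_nonneg s; linarith
  set U : Set ℂ := {z | σ < z.re} ∩ Metric.ball 0 R with hU
  have hUo : IsOpen U := (isOpen_lt continuous_const continuous_re).inter Metric.isOpen_ball
  have hUc : IsPreconnected U := ((convex_halfSpace_re_gt σ).inter (convex_ball 0 R)).isPreconnected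
  set u : ℕ → ℝ := fun n => R * (R + 1) * 2 ^ (R + 2) * ((n + 1 : ℕ) : ℝ) ^ (-σ - 2) with hu
  have hus : Summable u := by
    refine Summable.mul_left _ ?_
    exact (summable_nat_add_iff 1).2 (Real.summable_nat_rpow.2 (by linarith))
  have hb : ∀ (n : ℕ) (z : ℂ), z ∈ U → ‖tm n z‖ ≤ u n := by
    intro n z hz
    have hz1 : σ < z.re := hz.1
    have hz2 : ‖z‖ < R := by simpa using hz.2
    have hzr : z.re ≤ R := (re_le_norm z).trans hz2.le
    have hn1 : (1 : ℝ) ≤ n + 1 := by simp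
    have := second_diff (-z) (by simp; linarith) (N := (n + 1 : ℝ)) hn1
    refine this.trans ?_
    have a1 : ‖-z‖ ≤ R := by simpa using hz2.le
    have a2 : ‖-z - 1‖ ≤ R + 1 := (norm_sub_le _ _).trans (by simpa using hz2.le)
    have a3 : ((n + 1 : ℝ) / 2) ^ ((-z).re - 2) ≤ 2 ^ (R + 2) * ((n + 1 : ℕ) : ℝ) ^ (-σ - 2) := by
      rw [Real.div_rpow (by linarith) (by norm_num), div_eq_mul_inv, ← Real.rpow_neg (by norm_num), mul_comm]
      push_cast
      simp only [neg_re]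
      gcongr
      · norm_num
      · linarith
    simp only [hu]
    calc _ ≤ R * (R + 1) * (2 ^ (R + 2) * ((n + 1 : ℕ) : ℝ) ^ (-σ - 2)) := by gcongr
      _ = _ := by ring
  have hsU : s ∈ U := ⟨hσs, by simp [hR]⟩
  have hd : DifferentiableOn ℂ (fun z => ∑' n, tm n z) U := by
    refine differentiableOn_tsum_of_summable_norm hus (fun n => ?_) hUo hb
    have c1 : ∀ x : ℝ, 0 < x → Differentiable ℂ (fun z : ℂ => (x : ℂ) ^ (-z)) := fun x hx =>
      differentiable_neg.const_cpow (Or.inl (by exact_mod_cast hx.ne'))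
    have hn : (0 : ℝ) ≤ n := by positivity
    exact ((((c1 _ (by linarith)).add (c1 _ (by linarith))).div_const 2).sub
      (c1 _ (by linarith))).differentiableOn
  have hg : DifferentiableOn ℂ (fun s => hurwitzZetaEven ((1 / 2 : ℝ) : UnitAddCircle) s
      - hurwitzZetaEven 0 s - (1 / 2) * ((1 / 2 : ℝ) : ℂ) ^ (-s)) U := by
    refine ((differentiable_hurwitzZetaEven_sub_hurwitzZetaEven _ _).sub
      (Differentiable.const_mul (differentiable_neg.const_cpow (Or.inl ?_)) _)).differentiableOn
    norm_num
  have h2U : (2 : ℂ) ∈ U := ⟨by simp; linarith, by simp; linarith⟩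
  have heq := (hd.analyticOnNhd hUo).eqOn_of_preconnected_of_eventuallyEq (hg.analyticOnNhd hUo)
    hUc h2U (by
      have : ∀ᶠ z : ℂ in 𝓝 2, 1 < z.re :=
        (isOpen_lt continuous_const continuous_re).mem_nhds (by simp)
      filter_upwards [this] with z hz
      exact (tm_hasSum_of_one_lt hz).tsum_eq)
  have hsum : Summable (fun n => tm n s) := Summable.of_norm_bounded hus (fun n => hb n s hsU)
  have := hsum.hasSum
  rwa [show (∑' n, tm n s) = _ from heq hsU] at this

lemma cosZeta_half {s : ℂ} (hs : 1 < s.re) :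
    cosZeta ((1 / 2 : ℝ) : UnitAddCircle) s = (2 ^ (1 - s) - 1) * riemannZeta s := by
  have h1 := hasSum_nat_cosZeta (1 / 2) hs
  have h2 := hasSum_nat_cosZeta 0 hs
  simp only [QuotientAddGroup.mk_zero, cosZeta_zero] at h2
  have h3 := h1.add h2
  have hi : Function.Injective (fun k : ℕ => 2 * k) := fun a b h => by simpa using h
  rw [← hi.hasSum_iff] at h3
  · have h4 := h2.mul_left (2 * (2 : ℂ) ^ (-s))
    have h5 := h3.unique (h4.congr_fun ?_)
    · rw [show (1 - s : ℂ) = 1 + -s by ring, cpow_add _ _ two_ne_zero, cpow_one]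
      linear_combination h5
    · intro n
      have : Real.cos (2 * Real.pi * (1 / 2) * ((2 * n : ℕ) : ℝ)) = 1 := by
        rw [show 2 * Real.pi * (1 / 2) * ((2 * n : ℕ) : ℝ) = n * (2 * Real.pi) by push_cast; ring]
        exact Real.cos_nat_mul_two_pi n
      simp only [Function.comp_apply, this]
      have e : (((2 * n : ℕ) : ℂ)) ^ s = 2 ^ s * (n : ℂ) ^ s := by
        rw [Nat.cast_mul, natCast_mul_natCast_cpow]; simp
      rw [e, cpow_neg]
      simp
      ring
  · intro n hn
    have : Real.cos (2 * Real.pi * (1 / 2) * (n : ℝ)) = -1 := by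
      rcases Nat.even_or_odd' n with ⟨k, rfl | rfl⟩
      · exact absurd ⟨k, rfl⟩ hn
      · rw [show 2 * Real.pi * (1 / 2) * ((2 * k + 1 : ℕ) : ℝ) = k * (2 * Real.pi) + Real.pi by
          push_cast; ring]
        exact Real.cos_nat_mul_two_pi_add_pi k
    rw [this]
    simp
    ring

lemma rzeta_hasSum {x : ℝ} (hx : 1 < x) :
    HasSum (fun n : ℕ => ((n : ℝ) + 1) ^ (-x)) (rzeta x) ∧ riemannZeta (x : ℂ) = (rzeta x : ℂ) := by
  have hs : Summable (fun n : ℕ => ((n : ℝ) + 1) ^ (-x)) := by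
    have := (summable_nat_add_iff 1).2 (Real.summable_nat_rpow (p := -x) |>.2 (by linarith))
    simpa using this
  have hz : riemannZeta (x : ℂ) = ((∑' n : ℕ, ((n : ℝ) + 1) ^ (-x) : ℝ) : ℂ) := by
    rw [zeta_eq_tsum_one_div_nat_add_one_cpow (by simpa using hx), ofReal_tsum]
    refine tsum_congr fun n => ?_
    rw [ofReal_cpow (by positivity)]
    push_cast
    rw [cpow_neg, one_div]
  have hr : rzeta x = ∑' n : ℕ, ((n : ℝ) + 1) ^ (-x) := by rw [rzeta, hz, ofReal_re]
  exact ⟨hr ▸ hs.hasSum, by rw [hz, hr]⟩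

lemma feq {s : ℝ} (hs : 1 < s) :
    rzeta (1 - s) = 2 * (2 * Real.pi) ^ (-s) * Real.Gamma s * Real.cos (Real.pi * s / 2) * rzeta s := by
  have h := riemannZeta_one_sub (s := (s : ℂ)) (fun n h => by
      have := congrArg re h; simp at this; have : (0 : ℝ) ≤ n := by positivity
      linarith) (fun h => by have := congrArg re h; simp at this; linarith)
  rw [(rzeta_hasSum hs).2, Complex.Gamma_ofReal] at h
  have e : (2 * (2 * (Real.pi : ℂ)) ^ (-(s : ℂ)) * (Real.Gamma s : ℂ) * cos (Real.pi * s / 2) * (rzeta s : ℂ))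
      = ((2 * (2 * Real.pi) ^ (-s) * Real.Gamma s * Real.cos (Real.pi * s / 2) * rzeta s : ℝ) : ℂ) := by
    push_cast
    rw [ofReal_cpow (by positivity)]
    push_cast
    rfl
  rw [e] at h
  rw [rzeta, ofReal_sub, ofReal_one, h, ofReal_re]

lemma t_hasSum {α : ℝ} (h1 : 1 < α) (h2 : α < 2) :
    HasSum (fun n : ℕ => (((n : ℝ) + 1 - 1 / 2) ^ (α - 1) + ((n : ℝ) + 1 + 1 / 2) ^ (α - 1)) / 2
        - ((n : ℝ) + 1) ^ (α - 1))
      (2 * (2 * Real.pi) ^ (-α) * Real.Gamma α * Real.cos (Real.pi * α / 2)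
        * ((2 : ℝ) ^ (1 - α) - 2) * rzeta α - 1 / 2 * (1 / 2 : ℝ) ^ (α - 1)) := by
  have h := tm_hasSum (s := 1 - (α : ℂ)) (by simp; linarith)
  have c1 : ∀ n : ℕ, (α : ℂ) ≠ -n := fun n h => by
      have := congrArg re h; simp at this; have : (0 : ℝ) ≤ n := by positivity
      linarith
  have c2 : (α : ℂ) ≠ 1 := fun h => by have := congrArg re h; simp at this; linarith
  rw [hurwitzZetaEven_one_sub _ c1 (Or.inr c2), hurwitzZetaEven_one_sub _ c1 (Or.inr c2),
    cosZeta_zero, cosZeta_half (by simpa using h1), (rzeta_hasSum h1).2, Complex.Gamma_ofReal] at h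
  have hp : ∀ x : ℝ, 0 ≤ x → (x : ℂ) ^ (-(1 - (α : ℂ))) = ((x ^ (α - 1) : ℝ) : ℂ) := by
    intro x hx
    rw [ofReal_cpow hx]; push_cast; congr 1; ring
  rw [← Complex.hasSum_ofReal]
  have hv : ((2 * (2 * Real.pi) ^ (-α) * Real.Gamma α * Real.cos (Real.pi * α / 2)
        * ((2 : ℝ) ^ (1 - α) - 2) * rzeta α - 1 / 2 * (1 / 2 : ℝ) ^ (α - 1) : ℝ) : ℂ) =
      2 * (2 * (Real.pi : ℂ)) ^ (-(α : ℂ)) * (Real.Gamma α : ℂ) * cos (Real.pi * α / 2)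
        * ((2 ^ (1 - (α : ℂ)) - 1) * (rzeta α : ℂ))
      - 2 * (2 * (Real.pi : ℂ)) ^ (-(α : ℂ)) * (Real.Gamma α : ℂ) * cos (Real.pi * α / 2) * (rzeta α : ℂ)
      - (1 / 2) * ((1 / 2 : ℝ) : ℂ) ^ (-(1 - (α : ℂ))) := by
    rw [hp _ (by norm_num)]
    have q1 : (2 * (Real.pi : ℂ)) ^ (-(α : ℂ)) = (((2 * Real.pi) ^ (-α) : ℝ) : ℂ) := by
      rw [ofReal_cpow (by positivity)]; push_cast; rfl
    have q2 : (2 : ℂ) ^ (1 - (α : ℂ)) = (((2 : ℝ) ^ (1 - α) : ℝ) : ℂ) := by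
      rw [ofReal_cpow (by positivity)]; push_cast; rfl
    rw [q1, q2]
    push_cast
    ring
  rw [hv]
  refine h.congr_fun fun n => ?_
  have hn : (0 : ℝ) ≤ n := by positivity
  unfold tm
  rw [hp _ (by linarith), hp _ (by linarith), hp _ (by linarith)]
  push_cast
  ring

lemma choose_succ' (r : ℝ) (k : ℕ) :
    ((k : ℝ) + 1) * Ring.choose r (k + 1) = (r - k) * Ring.choose r k := by
  have h := Ring.choose_smul_choose r (Nat.le_succ k)
  rw [Nat.choose_succ_self_right] at h
  simp only [Nat.succ_eq_add_one, Nat.add_sub_cancel_left, Ring.choose_one_right, nsmul_eq_mul] at h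
  push_cast at h
  linarith

lemma gamma_choose {α : ℝ} (h1 : 1 < α) (h2 : α < 2) (k : ℕ) :
    Real.Gamma (k + 1 - α) / (Nat.factorial k : ℝ)
      = Real.Gamma (1 - α) * ((-1) ^ k * Ring.choose (α - 1) k) := by
  induction k with
  | zero => simp
  | succ k ih =>
    have hne : (k : ℝ) + 1 - α ≠ 0 := by
      rcases k with _ | k
      · simp; linarith
      · push_cast; have : (0 : ℝ) ≤ k := by positivity
        linarith
    have hk : (k : ℝ) + 1 ≠ 0 := by positivity
    have hf : (Nat.factorial k : ℝ) ≠ 0 := by positivity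
    rw [show (((k + 1 : ℕ) : ℝ) + 1 - α) = (k + 1 - α) + 1 by push_cast; ring,
      Real.Gamma_add_one hne, Nat.factorial_succ]
    have := choose_succ' (α - 1) k
    have e : Ring.choose (α - 1) (k + 1) = (α - 1 - k) * Ring.choose (α - 1) k / (k + 1) := by
      field_simp; linarith
    rw [e]
    push_cast
    rw [mul_div_mul_comm, ih, pow_succ]
    field_simp
    ring

lemma even_binom (β : ℝ) {x : ℝ} (hx0 : 0 ≤ x) (hx : x < 1) :
    HasSum (fun m : ℕ => Ring.choose β (2 * (m + 1)) * x ^ (2 * (m + 1)))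
      (((1 - x) ^ β + (1 + x) ^ β) / 2 - 1) := by
  have key : ∀ y : ℝ, |y| < 1 → HasSum (fun k : ℕ => Ring.choose β k * y ^ k) ((1 + y) ^ β) := by
    intro y hy
    have h := (Real.one_add_rpow_hasFPowerSeriesOnBall_zero (a := β)).hasSum (y := y)
      (by simpa [enorm_eq_nnnorm, ← NNReal.coe_lt_coe] using hy)
    simp only [binomialSeries_apply, zero_add] at h
    simpa using h
  have hp := key x (by rwa [abs_of_nonneg hx0])
  have hm := key (-x) (by rwa [abs_neg, abs_of_nonneg hx0])
  have h := (hm.add hp).div_const 2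
  have hi : Function.Injective (fun k : ℕ => 2 * k) := fun a b h => by simpa using h
  rw [← hi.hasSum_iff] at h
  · have h' := (hasSum_nat_add_iff' 1).2 h
    have e : ((1 - x) ^ β + (1 + x) ^ β) / 2 - 1 = ((1 + -x) ^ β + (1 + x) ^ β) / 2 -
      ∑ i ∈ Finset.range 1, ((fun k => (Ring.choose β k * (-x) ^ k + Ring.choose β k * x ^ k) / 2)
        ∘ (fun k : ℕ => 2 * k)) i := by
      simp [sub_eq_add_neg]
    rw [e]
    refine h'.congr_fun fun m => ?_
    simp only [Function.comp_apply]
    rw [(even_two_mul (m + 1)).neg_pow]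
    ring
  · intro n hn
    have : Odd n := by
      rcases Nat.even_or_odd' n with ⟨k, rfl | rfl⟩
      · exact absurd ⟨k, rfl⟩ hn
      · exact odd_two_mul_add_one k
    rw [this.neg_pow]
    ring

lemma hasSum_swap' {a : ℕ → ℕ → ℝ} (h0 : ∀ n m, 0 ≤ a n m) {r c : ℕ → ℝ} {S : ℝ}
    (hr : ∀ n, HasSum (a n) (r n)) (hS : HasSum r S) (hc : ∀ m, HasSum (fun n => a n m) (c m)) :
    HasSum c S := by
  have hs : Summable (fun p : ℕ × ℕ => a p.1 p.2) := by
    rw [summable_prod_of_nonneg (fun p => h0 _ _)]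
    refine ⟨fun n => (hr n).summable, ?_⟩
    simp only [(hr _).tsum_eq]
    exact hS.summable
  have h1 := hs.hasSum.prod_fiberwise hr
  have h2 : HasSum (fun p : ℕ × ℕ => a p.1 p.2) S := by
    have := hs.hasSum
    rwa [h1.unique hS] at this
  have h3 := (Equiv.prodComm ℕ ℕ).hasSum_iff.2 h2
  exact h3.prod_fiberwise hc

/-- for `1 < α < 2`, the series
`∑_{m=1}^∞ 2 (-1)^{m+1} ζ(α-2m) π^{2m} / (2m)!` converges to
`(4 - 2^{2-α}) ζ(α) + 2 π^{α-1} sin(απ/2) Γ(1-α)`.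
(The sum over `m ≥ 1` is indexed here by `m : ℕ` via `m + 1`.) -/
theorem stmt_14 (α : ℝ) (h1 : 1 < α) (h2 : α < 2) :
    HasSum
      (fun m : ℕ =>
        2 * (-1 : ℝ) ^ ((m + 1) + 1) * rzeta (α - 2 * ((m : ℝ) + 1))
          * Real.pi ^ (2 * (m + 1)) / (Nat.factorial (2 * (m + 1)) : ℝ))
      ((4 - (2 : ℝ) ^ (2 - α)) * rzeta α
        + 2 * Real.pi ^ (α - 1) * Real.sin (α * Real.pi / 2) * Real.Gamma (1 - α)) := by
  have hpi := Real.pi_pos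
  have hs1 : ∀ m : ℕ, 1 < ((2 * (m + 1) : ℕ) : ℝ) + 1 - α := fun m => by
    push_cast; have : (0 : ℝ) ≤ m := by positivity
    linarith
  have hsw := hasSum_swap'
    (a := fun n m : ℕ => Real.Gamma (((2 * (m + 1) : ℕ) : ℝ) + 1 - α) / (Nat.factorial (2 * (m + 1)) : ℝ)
      * (1 / 2) ^ (2 * (m + 1)) * ((n : ℝ) + 1) ^ (-(((2 * (m + 1) : ℕ) : ℝ) + 1 - α)))
    (c := fun m : ℕ => Real.Gamma (((2 * (m + 1) : ℕ) : ℝ) + 1 - α) / (Nat.factorial (2 * (m + 1)) : ℝ)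
      * (1 / 2) ^ (2 * (m + 1)) * rzeta (((2 * (m + 1) : ℕ) : ℝ) + 1 - α))
    ?_ ?_ ((t_hasSum h1 h2).mul_left (Real.Gamma (1 - α))) ?_
  · have hf := hsw.mul_left (-4 * Real.sin (α * Real.pi / 2) * (2 * Real.pi) ^ (α - 1))
    have hv : (4 - (2 : ℝ) ^ (2 - α)) * rzeta α
        + 2 * Real.pi ^ (α - 1) * Real.sin (α * Real.pi / 2) * Real.Gamma (1 - α) =
        -4 * Real.sin (α * Real.pi / 2) * (2 * Real.pi) ^ (α - 1) *
        (Real.Gamma (1 - α) * (2 * (2 * Real.pi) ^ (-α) * Real.Gamma α * Real.cos (Real.pi * α / 2)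
        * ((2 : ℝ) ^ (1 - α) - 2) * rzeta α - 1 / 2 * (1 / 2 : ℝ) ^ (α - 1))) := by
      have g := Real.Gamma_mul_Gamma_one_sub α
      have hsin : Real.sin (Real.pi * α) ≠ 0 := by
        have : Real.sin (Real.pi * α) = - Real.sin (Real.pi * α - Real.pi) := by
          rw [Real.sin_sub_pi]; ring
        rw [this, neg_ne_zero]
        exact (Real.sin_pos_of_pos_of_lt_pi (by nlinarith) (by nlinarith)).ne'
      have d : Real.sin (Real.pi * α) = 2 * Real.sin (α * Real.pi / 2) * Real.cos (Real.pi * α / 2) := by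
        rw [show α * Real.pi / 2 = Real.pi * α / 2 by ring, ← Real.sin_two_mul]; congr 1; ring
      have g' : Real.Gamma (1 - α) * Real.Gamma α *
          (2 * Real.sin (α * Real.pi / 2) * Real.cos (Real.pi * α / 2)) = Real.pi := by
        rw [← d, mul_comm (Real.Gamma (1 - α)), g]; field_simp
      have e1 : (2 * Real.pi) ^ (α - 1) * (2 * Real.pi) ^ (-α) * (2 * Real.pi) = 1 := by
        rw [← Real.rpow_add (by positivity), ← Real.rpow_add_one (by positivity)]
        rw [show α - 1 + -α + 1 = 0 by ring, Real.rpow_zero]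
      have e2 : (2 * Real.pi) ^ (α - 1) * (1 / 2 : ℝ) ^ (α - 1) = Real.pi ^ (α - 1) := by
        rw [← Real.mul_rpow (by positivity) (by positivity)]; congr 1; ring
      have e3 : (2 : ℝ) ^ (2 - α) = 2 * 2 ^ (1 - α) := by
        rw [show 2 - α = (1 - α) + 1 by ring, Real.rpow_add_one (by norm_num)]; ring
      rw [e3]
      generalize (2 : ℝ) ^ (1 - α) = A at *
      generalize (2 * Real.pi) ^ (α - 1) = B at *
      generalize (2 * Real.pi) ^ (-α) = C at *
      generalize Real.Gamma (1 - α) = G at *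
      generalize Real.sin (α * Real.pi / 2) = sn at *
      rw [← e2]
      have e4 : B * C * (G * Real.Gamma α * (2 * sn * Real.cos (Real.pi * α / 2))) = 1 / 2 := by
        rw [g']; linarith
      linear_combination (-4 * (2 - A) * rzeta α) * e4
    rw [hv]
    refine hf.congr_fun fun m => ?_
    have hq : α - 2 * ((m : ℝ) + 1) = 1 - (((2 * (m + 1) : ℕ) : ℝ) + 1 - α) := by push_cast; ring
    rw [hq, feq (hs1 m)]
    have hc : Real.cos (Real.pi * (((2 * (m + 1) : ℕ) : ℝ) + 1 - α) / 2)
        = (-1) ^ (m + 1) * Real.sin (α * Real.pi / 2) := by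
      rw [show Real.pi * (((2 * (m + 1) : ℕ) : ℝ) + 1 - α) / 2
        = (Real.pi / 2 - α * Real.pi / 2) + ((m + 1 : ℕ) : ℝ) * Real.pi by push_cast; ring,
        Real.cos_add_nat_mul_pi, Real.cos_pi_div_two_sub]
    have hpw : (2 * Real.pi) ^ (-(((2 * (m + 1) : ℕ) : ℝ) + 1 - α)) * Real.pi ^ (2 * (m + 1))
        = (2 * Real.pi) ^ (α - 1) * (1 / 2) ^ (2 * (m + 1)) := by
      rw [show -(((2 * (m + 1) : ℕ) : ℝ) + 1 - α) = (α - 1) - ((2 * (m + 1) : ℕ) : ℝ) by ring,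
        Real.rpow_sub_natCast (by positivity), mul_pow, one_div, inv_pow]
      field_simp
    have hsg : (-1 : ℝ) ^ ((m + 1) + 1) * (-1) ^ (m + 1) = -1 := by
      rw [pow_succ, mul_right_comm, ← mul_pow]; simp
    rw [hc]
    generalize Real.Gamma (((2 * (m + 1) : ℕ) : ℝ) + 1 - α) = G at *
    generalize rzeta (((2 * (m + 1) : ℕ) : ℝ) + 1 - α) = Z at *
    generalize (2 * Real.pi) ^ (-(((2 * (m + 1) : ℕ) : ℝ) + 1 - α)) = P at *
    generalize (2 * Real.pi) ^ (α - 1) = Q at *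
    generalize (1 / 2 : ℝ) ^ (2 * (m + 1)) = H at *
    generalize Real.sin (α * Real.pi / 2) = sn at *
    generalize Real.pi ^ (2 * (m + 1)) = W at *
    generalize (-1 : ℝ) ^ ((m + 1) + 1) = s1 at *
    generalize (-1 : ℝ) ^ (m + 1) = s2 at *
    generalize ((Nat.factorial (2 * (m + 1)) : ℕ) : ℝ) = F at *
    calc _ = 4 * (s1 * s2) * (P * W) * G * sn * Z / F := by ring
      _ = _ := by rw [hsg, hpw]; ring
  · intro n m
    have := Real.Gamma_pos_of_pos (lt_trans one_pos (hs1 m))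
    positivity
  · intro n
    have hn : (0 : ℝ) < (n : ℝ) + 1 := by positivity
    have hn1 : (1 : ℝ) ≤ (n : ℝ) + 1 := by simp
    have hx1 : 1 / (2 * ((n : ℝ) + 1)) < 1 := by rw [div_lt_one (by positivity)]; linarith
    have hb := (even_binom (α - 1) (x := 1 / (2 * ((n : ℝ) + 1))) (by positivity) hx1).mul_left
      (Real.Gamma (1 - α) * ((n : ℝ) + 1) ^ (α - 1))
    have p1 : ((n : ℝ) + 1 - 1 / 2) ^ (α - 1)
        = ((n : ℝ) + 1) ^ (α - 1) * (1 - 1 / (2 * ((n : ℝ) + 1))) ^ (α - 1) := by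
      rw [← Real.mul_rpow hn.le (by linarith)]; congr 1; field_simp
    have p2 : ((n : ℝ) + 1 + 1 / 2) ^ (α - 1)
        = ((n : ℝ) + 1) ^ (α - 1) * (1 + 1 / (2 * ((n : ℝ) + 1))) ^ (α - 1) := by
      rw [← Real.mul_rpow hn.le (by positivity)]; congr 1; field_simp
    rw [p1, p2]
    have hv : Real.Gamma (1 - α) * ((((n : ℝ) + 1) ^ (α - 1) * (1 - 1 / (2 * ((n : ℝ) + 1))) ^ (α - 1)
        + ((n : ℝ) + 1) ^ (α - 1) * (1 + 1 / (2 * ((n : ℝ) + 1))) ^ (α - 1)) / 2 - ((n : ℝ) + 1) ^ (α - 1))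
        = Real.Gamma (1 - α) * ((n : ℝ) + 1) ^ (α - 1) * (((1 - 1 / (2 * ((n : ℝ) + 1))) ^ (α - 1)
        + (1 + 1 / (2 * ((n : ℝ) + 1))) ^ (α - 1)) / 2 - 1) := by ring
    rw [hv]
    refine hb.congr_fun fun m => ?_
    rw [gamma_choose h1 h2, (even_two_mul (m + 1)).neg_one_pow,
      show -(((2 * (m + 1) : ℕ) : ℝ) + 1 - α) = (α - 1) - ((2 * (m + 1) : ℕ) : ℝ) by ring,
      Real.rpow_sub_natCast hn.ne', div_pow, div_pow, mul_pow]
    field_simp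
  · intro m
    exact (rzeta_hasSum (hs1 m)).1.mul_left _
end

section
/- Fix a real α with 1 < α < 2. For even integers n ≥ 4, define λ_k(α,n) = 2 ∑_{j=1}^{n−1} j^{−α} cos(2πkj/n), the rescaled eigenvalues λ̃_k(α,n) = (λ_k(α,n) − λ_{n/2}(α,n)) / (λ_0(α,n) − λ_{n/2}(α,n)), and S_1(α,n) = (1/n) ∑_{k=1}^{n−1} (1 − λ̃_k(α,n))^{−1}. Then the sequence S_1(α,n) converges to a finite positive limit as even n → ∞. -/
/-- Rescaled eigenvalues `λ̃_k = (λ_k - λ_{n/2})/(λ_0 - λ_{n/2})` for even `n`. -/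
noncomputable def lamT (α : ℝ) (n k : ℕ) : ℝ :=
  (lam α n k - lam α n (n / 2)) / (lam α n 0 - lam α n (n / 2))

/-- `S_q(α,n) = (1/n) ∑_{k=1}^{n-1} (1 - λ̃_k)^{-q}`. -/
noncomputable def Sq (q : ℕ) (α : ℝ) (n : ℕ) : ℝ :=
  (1 / (n : ℝ)) * ∑ k ∈ Finset.Icc 1 (n - 1), (1 - lamT α n k) ^ (-(q : ℤ))

/-- The dispersion function. -/
noncomputable def DD (α : ℝ) (N : ℕ) (y : ℝ) : ℝ :=
  2 * ∑ j ∈ Finset.Icc 1 (N - 1), (j : ℝ) ^ (-α) * (1 - Real.cos (2 * Real.pi * y * j))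

/-- The limiting dispersion function. -/
noncomputable def DI (α : ℝ) (y : ℝ) : ℝ :=
  2 * ∑' j : ℕ, (if 1 ≤ j then (j : ℝ) ^ (-α) * (1 - Real.cos (2 * Real.pi * y * j)) else 0)

lemma lam_sub (α : ℝ) (N k : ℕ) : lam α N 0 - lam α N k = DD α N ((k : ℝ) / N) := by
  unfold lam DD
  rw [← mul_sub, ← Finset.sum_sub_distrib]
  congr 1
  refine Finset.sum_congr rfl fun j _ => ?_
  have : 2 * Real.pi * (k : ℝ) * j / N = 2 * Real.pi * ((k : ℝ) / N) * j := by ring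
  rw [this]; simp; ring

lemma DD_term_nonneg (α y : ℝ) (j : ℕ) :
    0 ≤ (j : ℝ) ^ (-α) * (1 - Real.cos (2 * Real.pi * y * j)) :=
  mul_nonneg (by positivity) (by linarith [Real.cos_le_one (2 * Real.pi * y * j)])

lemma DD_nonneg (α : ℝ) (N : ℕ) (y : ℝ) : 0 ≤ DD α N y :=
  mul_nonneg (by norm_num) (Finset.sum_nonneg fun j _ => DD_term_nonneg α y j)

lemma DD_half_pos (α : ℝ) (N : ℕ) (hN : 2 ≤ N) : 0 < DD α N (1 / 2) := by
  unfold DD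
  have h := Finset.single_le_sum (f := fun j : ℕ => (j : ℝ) ^ (-α) *
    (1 - Real.cos (2 * Real.pi * (1/2) * j))) (fun j _ => DD_term_nonneg α (1/2) j)
    (show 1 ∈ Finset.Icc 1 (N - 1) by simp; omega)
  have e : 2 * Real.pi * (1/2) * ((1:ℕ):ℝ) = Real.pi := by push_cast; ring
  simp only [e, Real.cos_pi] at h
  norm_num at h
  norm_num
  linarith

lemma DD_zero (α : ℝ) (N : ℕ) : DD α N 0 = 0 := by simp [DD]

lemma DD_one_sub (α : ℝ) (N : ℕ) (y : ℝ) : DD α N (1 - y) = DD α N y := by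
  unfold DD
  congr 1
  refine Finset.sum_congr rfl fun j _ => ?_
  have : 2 * Real.pi * (1 - y) * j = (j : ℕ) * (2 * Real.pi) - 2 * Real.pi * y * j := by ring
  rw [this, Real.cos_nat_mul_two_pi_sub]

lemma one_sub_cos_ge (y : ℝ) (h0 : 0 ≤ y) (h1 : y ≤ 1 / 2) :
    8 * y ^ 2 ≤ 1 - Real.cos (2 * Real.pi * y) := by
  have hs : 2 * y ≤ Real.sin (Real.pi * y) := by
    have := Real.mul_le_sin (x := Real.pi * y) (by positivity) (by nlinarith [Real.pi_pos])
    have e : 2 / Real.pi * (Real.pi * y) = 2 * y := by field_simp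
    linarith
  have : Real.cos (2 * Real.pi * y) = 1 - 2 * Real.sin (Real.pi * y) ^ 2 := by
    rw [show 2 * Real.pi * y = 2 * (Real.pi * y) by ring, Real.cos_two_mul, Real.cos_sq']
    ring
  nlinarith

lemma DD_lower (α : ℝ) (h1 : 1 < α) (h2 : α < 2) :
    ∃ c : ℝ, 0 < c ∧ ∀ N k : ℕ, 1 ≤ k → 2 * k ≤ N →
      c * ((k : ℝ) / N) ^ (α - 1) ≤ DD α N ((k : ℝ) / N) := by
  refine ⟨8 * (4 : ℝ) ^ (α - 3), by positivity, fun N k hk hkN => ?_⟩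
  set M := N / (2 * k) with hM
  have hM1 : 1 ≤ M := (Nat.one_le_div_iff (by omega)).2 hkN
  have hMk : M * (2 * k) ≤ N := Nat.div_mul_le_self _ _
  have hMk' : N < (M + 1) * (2 * k) := by
    have := Nat.lt_div_mul_add (a := N) (b := 2 * k) (by omega)
    rw [← hM] at this; linarith
  have hMN : M ≤ N - 1 := by
    have : M * 2 ≤ M * (2 * k) := by nlinarith
    omega
  set x : ℝ := (k : ℝ) / N with hx
  have hN0 : (0 : ℝ) < N := by exact_mod_cast (by omega : 0 < N)
  have hk0 : (0 : ℝ) < k := by exact_mod_cast hk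
  have hx0 : 0 < x := by positivity
  have hM0 : (0 : ℝ) < M := by exact_mod_cast hM1
  have hxM : x * M ≤ 1 / 2 := by
    rw [hx, div_mul_eq_mul_div, div_le_iff₀ hN0]
    have : (M : ℝ) * (2 * k) ≤ N := by exact_mod_cast hMk
    linarith
  have hxM' : 1 ≤ 4 * x * M := by
    have : (N : ℝ) ≤ (M + 1) * (2 * k) := by exact_mod_cast hMk'.le
    have hM1' : (1 : ℝ) ≤ M := by exact_mod_cast hM1
    have e : 4 * x * M = (4 * k * M) / N := by rw [hx]; ring
    rw [e, le_div_iff₀ hN0]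
    nlinarith
  have key : ∀ j ∈ Finset.Icc 1 M, 8 * x ^ 2 * (M : ℝ) ^ (1 - α) * j ≤
      (j : ℝ) ^ (-α) * (1 - Real.cos (2 * Real.pi * x * j)) := by
    intro j hj
    rw [Finset.mem_Icc] at hj
    have hj0 : (0 : ℝ) < j := by exact_mod_cast hj.1
    have hjM : (j : ℝ) ≤ M := by exact_mod_cast hj.2
    have hc := one_sub_cos_ge (x * j) (by positivity)
      (le_trans (mul_le_mul_of_nonneg_left hjM hx0.le) hxM)
    rw [← mul_assoc] at hc
    have hr : (M : ℝ) ^ (1 - α) ≤ (j : ℝ) ^ (1 - α) :=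
      Real.rpow_le_rpow_of_nonpos hj0 hjM (by linarith)
    have e : (j : ℝ) ^ (1 - α) = (j : ℝ) ^ (-α) * j := by
      rw [show 1 - α = -α + 1 by ring, Real.rpow_add hj0, Real.rpow_one]
    calc 8 * x ^ 2 * (M : ℝ) ^ (1 - α) * j ≤ 8 * x ^ 2 * (j : ℝ) ^ (1 - α) * j := by gcongr
      _ = (j : ℝ) ^ (-α) * (8 * (x * j) ^ 2) := by rw [e]; ring
      _ ≤ _ := by gcongr
  have hsum : (M : ℝ) ^ 2 / 2 ≤ ∑ j ∈ Finset.Icc 1 M, (j : ℝ) := by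
    have : ∀ m : ℕ, (m : ℝ) ^ 2 / 2 ≤ ∑ j ∈ Finset.Icc 1 m, (j : ℝ) := by
      intro m
      induction m with
      | zero => simp
      | succ m ih =>
        rw [Finset.sum_Icc_succ_top (by omega)]
        push_cast
        nlinarith
    exact this M
  have h3 : ∑ j ∈ Finset.Icc 1 M, 8 * x ^ 2 * (M : ℝ) ^ (1 - α) * j ≤
      ∑ j ∈ Finset.Icc 1 (N - 1), (j : ℝ) ^ (-α) * (1 - Real.cos (2 * Real.pi * x * j)) :=
    (Finset.sum_le_sum key).trans (Finset.sum_le_sum_of_subset_of_nonneg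
      (Finset.Icc_subset_Icc_right hMN) fun j _ _ => DD_term_nonneg α x j)
  rw [← Finset.mul_sum] at h3
  have h4 : 8 * x ^ 2 * (M : ℝ) ^ (1 - α) * ((M : ℝ) ^ 2 / 2) ≤
      8 * x ^ 2 * (M : ℝ) ^ (1 - α) * ∑ j ∈ Finset.Icc 1 M, (j : ℝ) := by gcongr
  have h5 : (M : ℝ) ^ (1 - α) * (M : ℝ) ^ 2 = (M : ℝ) ^ (3 - α) := by
    rw [← Real.rpow_natCast, ← Real.rpow_add hM0]; congr 1; push_cast; ring
  have h6 : (4 * x) ^ (α - 3) ≤ (M : ℝ) ^ (3 - α) := by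
    have : (1 : ℝ) ≤ (4 * x * M) ^ (3 - α) := Real.one_le_rpow hxM' (by linarith)
    rw [Real.mul_rpow (by positivity) hM0.le] at this
    rw [show α - 3 = -(3 - α) by ring, Real.rpow_neg (by positivity)]
    rw [inv_le_iff_one_le_mul₀' (by positivity)]
    exact this
  have h7 : 8 * (4 : ℝ) ^ (α - 3) * x ^ (α - 1) = 8 * x ^ 2 * (4 * x) ^ (α - 3) := by
    rw [Real.mul_rpow (by norm_num) hx0.le]
    have : x ^ (α - 1) = x ^ (α - 3) * x ^ 2 := by
      rw [← Real.rpow_natCast, ← Real.rpow_add hx0]; congr 1; push_cast; ring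
    rw [this]; ring
  rw [h7]
  unfold DD
  calc 8 * x ^ 2 * (4 * x) ^ (α - 3) ≤ 8 * x ^ 2 * (M : ℝ) ^ (3 - α) := by gcongr
    _ = 2 * (8 * x ^ 2 * (M : ℝ) ^ (1 - α) * ((M : ℝ) ^ 2 / 2)) := by rw [← h5]; ring
    _ ≤ _ := by linarith

lemma summable_aux (α : ℝ) (h1 : 1 < α) : Summable fun j : ℕ => 2 * (j : ℝ) ^ (-α) :=
  (Real.summable_nat_rpow.2 (by linarith)).mul_left 2

lemma term_le (α y : ℝ) (j : ℕ) :
    (j : ℝ) ^ (-α) * (1 - Real.cos (2 * Real.pi * y * j)) ≤ 2 * (j : ℝ) ^ (-α) := by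
  have : (0:ℝ) ≤ (j : ℝ) ^ (-α) := by positivity
  nlinarith [Real.neg_one_le_cos (2 * Real.pi * y * j)]

lemma DD_le (α : ℝ) (h1 : 1 < α) (N : ℕ) (y : ℝ) :
    DD α N y ≤ 2 * ∑' j : ℕ, 2 * (j : ℝ) ^ (-α) := by
  unfold DD
  gcongr
  exact (Finset.sum_le_sum fun j _ => term_le α y j).trans
    ((summable_aux α h1).sum_le_tsum _ fun j _ => by positivity)

lemma DD_tendsto (α : ℝ) (h1 : 1 < α) (u : ℕ → ℕ) (hu : Filter.Tendsto u Filter.atTop Filter.atTop)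
    (y : ℕ → ℝ) (x : ℝ) (hy : Filter.Tendsto y Filter.atTop (nhds x)) :
    Filter.Tendsto (fun n => DD α (u n) (y n)) Filter.atTop (nhds (DI α x)) := by
  have e : ∀ n, DD α (u n) (y n) = 2 * ∑' j : ℕ, (if j ∈ Finset.Icc 1 (u n - 1) then
      (j : ℝ) ^ (-α) * (1 - Real.cos (2 * Real.pi * y n * j)) else 0) := by
    intro n
    unfold DD
    rw [tsum_eq_sum (s := Finset.Icc 1 (u n - 1)) (fun j hj => if_neg hj)]
    congr 1
    exact Finset.sum_congr rfl fun j hj => (if_pos hj).symm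
  simp_rw [e]
  refine Filter.Tendsto.const_mul 2 ?_
  refine tendsto_tsum_of_dominated_convergence (summable_aux α h1) ?_ ?_
  · intro j
    by_cases hj : 1 ≤ j
    · have hev : ∀ᶠ n in Filter.atTop, j ∈ Finset.Icc 1 (u n - 1) := by
        filter_upwards [hu.eventually_ge_atTop (j + 1)] with n hn
        rw [Finset.mem_Icc]; omega
      rw [if_pos hj]
      have : Filter.Tendsto (fun n => (j : ℝ) ^ (-α) * (1 - Real.cos (2 * Real.pi * y n * j)))
          Filter.atTop (nhds ((j : ℝ) ^ (-α) * (1 - Real.cos (2 * Real.pi * x * j)))) := by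
        refine Filter.Tendsto.const_mul _ (Filter.Tendsto.const_sub _ ?_)
        exact (Real.continuous_cos.tendsto _).comp ((hy.const_mul _).mul_const _)
      refine this.congr' ?_
      filter_upwards [hev] with n hn
      rw [if_pos hn]
    · simp [hj]
  · refine Filter.Eventually.of_forall fun n j => ?_
    split_ifs
    · rw [Real.norm_of_nonneg (DD_term_nonneg α _ j)]; exact term_le α _ j
    · simp; positivity

lemma DI_pos (α : ℝ) (h1 : 1 < α) (x : ℝ) (hx0 : 0 < x) (hx1 : x < 1) : 0 < DI α x := by
  unfold DI
  have hn : ∀ j : ℕ, 0 ≤ (if 1 ≤ j then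
      (j : ℝ) ^ (-α) * (1 - Real.cos (2 * Real.pi * x * j)) else 0) := by
    intro j; split_ifs
    · exact DD_term_nonneg α x j
    · exact le_rfl
  refine mul_pos (by norm_num) (Summable.tsum_pos ?_ hn 1 ?_)
  · refine Summable.of_nonneg_of_le hn (fun j => ?_) (summable_aux α h1)
    split_ifs
    · exact term_le α x j
    · positivity
  · simp only [le_refl, if_true, Nat.cast_one, Real.one_rpow, one_mul, mul_one]
    have hs : 0 < Real.sin (Real.pi * x) :=
      Real.sin_pos_of_pos_of_lt_pi (by positivity) (by nlinarith [Real.pi_pos])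
    have : Real.cos (2 * Real.pi * x) = 1 - 2 * Real.sin (Real.pi * x) ^ 2 := by
      rw [show 2 * Real.pi * x = 2 * (Real.pi * x) by ring, Real.cos_two_mul, Real.cos_sq']
      ring
    rw [this]; nlinarith

lemma integral_floor (f : ℕ → ℝ) (N : ℕ) (hN : 0 < N) :
    ∫ x in (0:ℝ)..1, f ⌊(N : ℝ) * x⌋₊ = (1 / (N : ℝ)) * ∑ k ∈ Finset.range N, f k := by
  have hN0 : (N : ℝ) ≠ 0 := by positivity
  rw [intervalIntegral.integral_comp_mul_left (fun y => f ⌊y⌋₊) hN0]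
  have hk : ∀ k : ℕ, Set.EqOn (fun _ : ℝ => f k) (fun y => f ⌊y⌋₊)
      (Set.Ioo (k : ℝ) ((k + 1 : ℕ) : ℝ)) := by
    intro k y hy
    have : ⌊y⌋₊ = k := by
      rw [Nat.floor_eq_iff (le_trans (Nat.cast_nonneg k) hy.1.le)]
      exact ⟨hy.1.le, by have := hy.2; push_cast at this; exact this⟩
    simp [this]
  have hle : ∀ k : ℕ, (k : ℝ) ≤ ((k + 1 : ℕ) : ℝ) := fun k => by push_cast; linarith
  have hint : ∀ k : ℕ, IntervalIntegrable (fun y : ℝ => f ⌊y⌋₊) MeasureTheory.volume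
      (k : ℝ) ((k + 1 : ℕ) : ℝ) := by
    intro k
    have hc : IntervalIntegrable (fun _ : ℝ => f k) MeasureTheory.volume
      (k : ℝ) ((k + 1 : ℕ) : ℝ) := intervalIntegrable_const
    rw [intervalIntegrable_iff_integrableOn_Ioo_of_le (hle k)] at hc ⊢
    exact hc.congr_fun (hk k) measurableSet_Ioo
  have hval : ∀ k : ℕ, ∫ y in (k : ℝ)..((k + 1 : ℕ) : ℝ), f ⌊y⌋₊ = f k := by
    intro k
    rw [intervalIntegral.integral_of_le (hle k), MeasureTheory.integral_Ioc_eq_integral_Ioo,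
      ← MeasureTheory.setIntegral_congr_fun measurableSet_Ioo (hk k)]
    simp
  have hs := intervalIntegral.sum_integral_adjacent_intervals
    (f := fun y : ℝ => f ⌊y⌋₊) (μ := MeasureTheory.volume) (a := fun k : ℕ => (k : ℝ)) (n := N)
    (fun k _ => hint k)
  simp only [hval] at hs
  rw [hs]
  simp

lemma Sq_eq (α : ℝ) (n : ℕ) (hn : 1 ≤ n) :
    Sq 1 α (2 * n) = DD α (2 * n) (1 / 2) *
      ((1 / ((2 * n : ℕ) : ℝ)) * ∑ k ∈ Finset.range (2 * n),
        (DD α (2 * n) ((k : ℝ) / (2 * n : ℕ)))⁻¹) := by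
  have hp := DD_half_pos α (2 * n) (by omega)
  have hhalf : lam α (2 * n) 0 - lam α (2 * n) (2 * n / 2) = DD α (2 * n) (1 / 2) := by
    rw [lam_sub]
    congr 1
    have : (n : ℝ) ≠ 0 := by positivity
    rw [Nat.mul_div_cancel_left n (by norm_num)]
    push_cast
    field_simp
  have hterm : ∀ k : ℕ, (1 - lamT α (2 * n) k) ^ (-((1 : ℕ) : ℤ)) =
      DD α (2 * n) (1 / 2) * (DD α (2 * n) ((k : ℝ) / (2 * n : ℕ)))⁻¹ := by
    intro k
    have : 1 - lamT α (2 * n) k = DD α (2 * n) ((k : ℝ) / (2 * n : ℕ)) / DD α (2 * n) (1 / 2) := by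
      unfold lamT
      rw [hhalf, eq_div_iff hp.ne', sub_mul, div_mul_cancel₀ _ hp.ne', ← lam_sub, ← hhalf]
      ring
    rw [this]
    simp [div_eq_mul_inv]
  unfold Sq
  simp only [hterm]
  rw [← Finset.mul_sum]
  have hr : ∑ k ∈ Finset.range (2 * n), (DD α (2 * n) ((k : ℝ) / (2 * n : ℕ)))⁻¹ =
      ∑ k ∈ Finset.Icc 1 (2 * n - 1), (DD α (2 * n) ((k : ℝ) / (2 * n : ℕ)))⁻¹ := by
    symm
    refine Finset.sum_subset (fun k hk => ?_) (fun k hk hk' => ?_)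
    · rw [Finset.mem_Icc] at hk; rw [Finset.mem_range]; omega
    · rw [Finset.mem_Icc] at hk'; rw [Finset.mem_range] at hk
      have : k = 0 := by omega
      subst this
      simp [DD_zero]
  rw [hr]; ring

lemma floor_bound (α : ℝ) (h1 : 1 < α) (h2 : α < 2) :
    ∃ C : ℝ, 0 < C ∧ ∀ N : ℕ, 1 ≤ N → ∀ x : ℝ, 0 < x → x ≤ 1 →
      (DD α N ((⌊(N : ℝ) * x⌋₊ : ℝ) / N))⁻¹ ≤ C * (x ^ (1 - α) + (1 - x) ^ (1 - α)) := by
  obtain ⟨c, hc, H⟩ := DD_lower α h1 h2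
  refine ⟨c⁻¹ * 2 ^ (α - 1), by positivity, fun N hN x hx0 hx1 => ?_⟩
  have hN0 : (0 : ℝ) < N := by exact_mod_cast hN
  have h1x : 0 ≤ 1 - x := by linarith
  have hR : 0 ≤ c⁻¹ * 2 ^ (α - 1) * (x ^ (1 - α) + (1 - x) ^ (1 - α)) := by positivity
  set k := ⌊(N : ℝ) * x⌋₊ with hk
  have hkle : (k : ℝ) ≤ N * x := Nat.floor_le (by positivity)
  have hklt : (N : ℝ) * x < k + 1 := Nat.lt_floor_add_one _
  -- a general inversion step
  have step : ∀ m : ℕ, 1 ≤ m → 2 * m ≤ N → ∀ z : ℝ, 0 < z → z / 2 ≤ (m : ℝ) / N →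
      (DD α N ((m : ℝ) / N))⁻¹ ≤ c⁻¹ * 2 ^ (α - 1) * z ^ (1 - α) := by
    intro m hm hmN z hz hzm
    have hl : c * (z / 2) ^ (α - 1) ≤ DD α N ((m : ℝ) / N) :=
      le_trans (mul_le_mul_of_nonneg_left
        (Real.rpow_le_rpow (by positivity) hzm (by linarith)) hc.le) (H N m hm hmN)
    have hp : 0 < c * (z / 2) ^ (α - 1) := by positivity
    refine (inv_anti₀ hp hl).trans (le_of_eq ?_)
    rw [Real.div_rpow hz.le (by norm_num), show 1 - α = -(α - 1) by ring, Real.rpow_neg hz.le]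
    field_simp
  rcases Nat.eq_zero_or_pos k with h0 | hkpos
  · rw [h0]; simpa [DD_zero] using hR
  by_cases hkN : 2 * k ≤ N
  · have hk1 : (1 : ℝ) ≤ k := by exact_mod_cast hkpos
    refine (step k hkpos hkN x hx0 ?_).trans ?_
    · rw [le_div_iff₀ hN0]; nlinarith
    · gcongr
      have : 0 ≤ (1 - x) ^ (1 - α) := by positivity
      linarith
  · have hkN' : k ≤ N := by
      have : (k : ℝ) ≤ N := by nlinarith
      exact_mod_cast this
    have e : (((N - k : ℕ) : ℝ)) / N = 1 - (k : ℝ) / N := by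
      rw [Nat.cast_sub hkN']; field_simp
    rw [← DD_one_sub, ← e]
    rcases Nat.eq_zero_or_pos (N - k) with h0 | hpos
    · rw [h0]; simpa [DD_zero] using hR
    · have hxlt : x < 1 := by
        rcases hx1.lt_or_eq with h | h
        · exact h
        · exfalso
          rw [h] at hk
          simp at hk
          omega
      refine (step (N - k) hpos (by omega) (1 - x) (by linarith) ?_).trans ?_
      · rw [le_div_iff₀ hN0, Nat.cast_sub hkN']; nlinarith
      · gcongr
        have : 0 ≤ x ^ (1 - α) := by positivity
        linarith

lemma DD_continuous (α : ℝ) (N : ℕ) : Continuous (DD α N) := by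
  unfold DD
  fun_prop

lemma avg_tendsto (α : ℝ) (h1 : 1 < α) (h2 : α < 2) :
    Filter.Tendsto (fun n : ℕ => (1 / ((2 * n : ℕ) : ℝ)) * ∑ k ∈ Finset.range (2 * n),
        (DD α (2 * n) ((k : ℝ) / (2 * n : ℕ)))⁻¹) Filter.atTop
      (nhds (∫ x in (0:ℝ)..1, (DI α x)⁻¹)) := by
  obtain ⟨C, hC, HC⟩ := floor_bound α h1 h2
  have hu : Filter.Tendsto (fun n : ℕ => 2 * n) Filter.atTop Filter.atTop :=
    Filter.tendsto_id.const_mul_atTop' (by norm_num)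
  have key : Filter.Tendsto (fun n : ℕ => ∫ x in (0:ℝ)..1,
      (DD α (2 * n) ((⌊((2 * n : ℕ) : ℝ) * x⌋₊ : ℝ) / (2 * n : ℕ)))⁻¹) Filter.atTop
      (nhds (∫ x in (0:ℝ)..1, (DI α x)⁻¹)) := by
    refine intervalIntegral.tendsto_integral_filter_of_dominated_convergence
      (fun x => C * (x ^ (1 - α) + (1 - x) ^ (1 - α))) ?_ ?_ ?_ ?_
    · refine Filter.Eventually.of_forall fun n => Measurable.aestronglyMeasurable ?_
      refine Measurable.inv ((DD_continuous α (2 * n)).measurable.comp ?_)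
      refine Measurable.div_const ?_ _
      exact measurable_from_nat.comp (Nat.measurable_floor.comp (measurable_const_mul _))
    · filter_upwards [Filter.eventually_ge_atTop 1] with n hn
      refine Filter.Eventually.of_forall fun x hx => ?_
      rw [Set.uIoc_of_le zero_le_one] at hx
      rw [Real.norm_of_nonneg (inv_nonneg.2 (DD_nonneg _ _ _))]
      exact HC (2 * n) (by omega) x hx.1 hx.2
    · have i1 : IntervalIntegrable (fun x : ℝ => x ^ (1 - α)) MeasureTheory.volume 0 1 :=
        intervalIntegral.intervalIntegrable_rpow' (by linarith)
      have i2 : IntervalIntegrable (fun x : ℝ => (1 - x) ^ (1 - α)) MeasureTheory.volume 0 1 := by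
        have := (i1.comp_sub_left 1).symm
        simpa using this
      exact (i1.add i2).const_mul C
    · have hne : ∀ᵐ x : ℝ ∂MeasureTheory.volume, x ≠ 1 :=
        MeasureTheory.Measure.ae_ne _ 1
      filter_upwards [hne] with x hx1 hx
      rw [Set.uIoc_of_le zero_le_one] at hx
      refine Filter.Tendsto.inv₀ ?_ (DI_pos α h1 x hx.1 (lt_of_le_of_ne hx.2 hx1)).ne'
      refine DD_tendsto α h1 (fun n => 2 * n) hu _ x ?_
      have := (tendsto_nat_floor_mul_div_atTop (R := ℝ) hx.1.le).comp
        (tendsto_natCast_atTop_atTop.comp hu)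
      refine this.congr fun n => ?_
      simp [mul_comm]
  refine key.congr' ?_
  filter_upwards [Filter.eventually_ge_atTop 1] with n hn
  exact integral_floor (fun k => (DD α (2 * n) ((k : ℝ) / (2 * n : ℕ)))⁻¹) (2 * n) (by omega)

lemma avg_lower (α : ℝ) (h1 : 1 < α) (h2 : α < 2) :
    0 < ∫ x in (0:ℝ)..1, (DI α x)⁻¹ := by
  obtain ⟨c, hc, H⟩ := DD_lower α h1 h2
  set Z := 2 * ∑' j : ℕ, 2 * (j : ℝ) ^ (-α) with hZ
  have hZ0 : 0 < Z := lt_of_lt_of_le (DD_half_pos α 2 le_rfl) (DD_le α h1 2 _)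
  have hlow : Z⁻¹ / 2 ≤ ∫ x in (0:ℝ)..1, (DI α x)⁻¹ := by
    refine ge_of_tendsto (avg_tendsto α h1 h2) ?_
    filter_upwards [Filter.eventually_ge_atTop 1] with n hn
    have hn0 : (0 : ℝ) < n := by exact_mod_cast hn
    have hsub : ∑ k ∈ Finset.Icc 1 n, Z⁻¹ ≤ ∑ k ∈ Finset.range (2 * n),
        (DD α (2 * n) ((k : ℝ) / (2 * n : ℕ)))⁻¹ := by
      refine le_trans (Finset.sum_le_sum (g := fun k : ℕ =>
        (DD α (2 * n) ((k : ℝ) / (2 * n : ℕ)))⁻¹) fun k hk => ?_)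
        (Finset.sum_le_sum_of_subset_of_nonneg (fun k hk => ?_)
          fun k _ _ => inv_nonneg.2 (DD_nonneg _ _ _))
      · rw [Finset.mem_Icc] at hk
        have hk0 : (0 : ℝ) < k := by exact_mod_cast hk.1
        have hp := H (2 * n) k hk.1 (by omega)
        have hp' : 0 < c * ((k : ℝ) / (2 * n : ℕ)) ^ (α - 1) := by positivity
        exact inv_anti₀ (lt_of_lt_of_le hp' hp) (DD_le α h1 _ _)
      · rw [Finset.mem_Icc] at hk; rw [Finset.mem_range]; omega
    simp only [Finset.sum_const, Nat.card_Icc, Nat.add_sub_cancel, nsmul_eq_mul] at hsub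
    calc Z⁻¹ / 2 = (1 / ((2 * n : ℕ) : ℝ)) * (n * Z⁻¹) := by push_cast; field_simp
      _ ≤ _ := by gcongr
  have : 0 < Z⁻¹ := by positivity
  linarith

/-- for `1 < α < 2`, `S_1(α,n)` converges to a finite positive
limit along even `n → ∞`. -/
theorem stmt_15 (α : ℝ) (h1 : 1 < α) (h2 : α < 2) :
    ∃ L : ℝ, 0 < L ∧
      Filter.Tendsto (fun n : ℕ => Sq 1 α (2 * n)) Filter.atTop (nhds L) := by
  have hu : Filter.Tendsto (fun n : ℕ => 2 * n) Filter.atTop Filter.atTop :=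
    Filter.tendsto_id.const_mul_atTop' (by norm_num)
  refine ⟨DI α (1 / 2) * ∫ x in (0:ℝ)..1, (DI α x)⁻¹,
    mul_pos (DI_pos α h1 _ (by norm_num) (by norm_num)) (avg_lower α h1 h2), ?_⟩
  have := (DD_tendsto α h1 (fun n => 2 * n) hu (fun _ => 1 / 2) (1 / 2) tendsto_const_nhds).mul
    (avg_tendsto α h1 h2)
  refine this.congr' ?_
  filter_upwards [Filter.eventually_ge_atTop 1] with n hn
  exact (Sq_eq α n hn).symm
end
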